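/- arXiv:1403.5754 — 5 statements merged into one kernel-verified Lean document; each statement's English description precedes it below -/
import Mathlib

section
/- Let r ≥ 3 and n ≥ 2. Let π₀ = B(V) be a q-subgeometry of PG(r-1,q^n) and l_∞ = PG(U) a line not contained in the extension of any hyperplane of π₀, and let S = S(π₀,l_∞). Then the following are equivalent: (a) S is a scattered linear set, i.e. there exists an r-dimensional K-subspace U' of U with B(U') = S and dim_K(U' ∩ x) = 1 for every point x of S; (b) l_∞ is external to π₀ (contains no point of π₀) and every point of S lies in the L-span of exactly one K-subspace H of V with dim_K H = r-1. -/
/-!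
Write `V*` for the `K`-dual of `V`. Since `B(V)` is a subgeometry, the ambient space `W` is the base
change of `V`, so each functional on `V` extends uniquely to a functional on `W`, and the extension
of the hyperplane `ker f` is the kernel of the extended functional. On the line `PG(U)` that kernel
is one point, and for a fixed basis of `U` a vector spanning it depends linearly on `f`. This gives
an injective `K`-linear map `ψ : V* → W` for which the splash is the linear set of `ψ(V*)`, and for
which the extension of `ker f` meets the line in the point spanned by `ψ f`. As hyperplanes of `V`
are points of `PG(V*)`, every point of the splash lies on a unique hyperplane exactly when `ψ(V*)`
is scattered. A linear set of rank `r` is scattered exactly when it has as many points as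
`PG(r - 1, q)`, so being scattered depends only on the rank and the point set. Finally, the
hyperplanes through a point of `B(V)` form a subspace of rank `r - 1 ≥ 2` of `V*`, hence no such
point lies on the line if the splash is scattered.
-/

open Submodule Module

/-- `BSet L X` is the set of projective points (1-dimensional `L`-subspaces of `W`)
spanned by the nonzero vectors of `X`. -/
def BSet (L : Type*) [Field L] {W : Type*} [AddCommGroup W] [Module L W]
    (X : Set W) : Set (Submodule L W) :=
  {P | ∃ x ∈ X, x ≠ 0 ∧ P = Submodule.span L {x}}

/-- The splash of the `q`-subgeometry `B(V)` of `PG(W)` on the line `PG(U)`: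
the set of points of `PG(U)` lying in the `L`-span (extension) of some hyperplane
(`(r-1)`-dimensional `K`-subspace) of `V`. -/
def Splash (K L : Type*) [Field K] [Field L] [Algebra K L]
    {W : Type*} [AddCommGroup W] [Module L W] [Module K W] [IsScalarTower K L W]
    (V : Submodule K W) (U : Submodule L W) (r : ℕ) : Set (Submodule L W) :=
  {P | Module.finrank L P = 1 ∧ P ≤ U ∧
    ∃ H : Submodule K W, H ≤ V ∧ Module.finrank K H = r - 1 ∧
      P ≤ Submodule.span L (H : Set W)}

section LinearSet

variable {K W M : Type*} (L : Type*) [Field K] [Field L] [Algebra K L] [AddCommGroup W]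
  [Module L W] [Module K W] [IsScalarTower K L W] [AddCommGroup M] [Module K M]

/-- The linear set of the `K`-subspace `A` is scattered: each of its points has weight one, the
weight of a point being the `K`-dimension of its intersection with `A`. -/
def IsScattered (A : Submodule K W) : Prop :=
  ∀ P ∈ BSet L (A : Set W), finrank K ↥(A ⊓ P.restrictScalars K) = 1

variable {L}

lemma eq_span_singleton_of_mem {P : Submodule L W} (hP : finrank L P = 1) {x : W} (hx : x ∈ P)
    (hx0 : x ≠ 0) : P = L ∙ x :=
  ((isAtom_iff_finrank_eq_one.2 hP).le_iff_eq (mt span_singleton_eq_bot.1 hx0)).1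
    ((span_singleton_le_iff_mem x P).2 hx) |>.symm

lemma finrank_inf_span_singleton_eq_one_iff {A : Submodule K W} {x : W} (hx : x ∈ A)
    (hx0 : x ≠ 0) :
    finrank K ↥(A ⊓ (L ∙ x).restrictScalars K) = 1 ↔ A ⊓ (L ∙ x).restrictScalars K = K ∙ x := by
  refine ⟨fun h => ?_, fun h => h ▸ finrank_span_singleton hx0⟩
  have : FiniteDimensional K ↥(A ⊓ (L ∙ x).restrictScalars K) := .of_finrank_pos (by omega)
  have hle : K ∙ x ≤ A ⊓ (L ∙ x).restrictScalars K :=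
    (span_singleton_le_iff_mem _ _).2 ⟨hx, mem_span_singleton_self x⟩
  exact (eq_of_le_of_finrank_eq hle (by rw [h, finrank_span_singleton hx0])).symm

lemma span_singleton_map_eq_of_span_singleton_eq (ψ : M →ₗ[K] W) {x y : M}
    (h : K ∙ x = K ∙ y) : L ∙ ψ x = L ∙ ψ y := by
  rw [← span_span_of_tower K L {ψ x}, ← span_span_of_tower K L {ψ y}, ← Set.image_singleton,
    ← Set.image_singleton, span_image, span_image, h]

lemma isScattered_range_iff {ψ : M →ₗ[K] W} (hψ : Function.Injective ψ) :
    IsScattered L (LinearMap.range ψ) ↔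
      ∀ x y : M, x ≠ 0 → y ≠ 0 → L ∙ ψ x = L ∙ ψ y → K ∙ x = K ∙ y := by
  have hψ0 {x : M} (hx : x ≠ 0) : ψ x ≠ 0 := (map_ne_zero_iff ψ hψ).2 hx
  constructor
  · intro hscat x y hx hy hxy
    have hmap {z : M} (hz : z ≠ 0) :
        LinearMap.range ψ ⊓ (L ∙ ψ z).restrictScalars K = (K ∙ z).map ψ := by
      rw [map_span, Set.image_singleton]
      exact (finrank_inf_span_singleton_eq_one_iff (LinearMap.mem_range_self ψ z) (hψ0 hz)).1
        (hscat _ ⟨ψ z, LinearMap.mem_range_self ψ z, hψ0 hz, rfl⟩)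
    exact map_injective_of_injective hψ (by rw [← hmap hx, ← hmap hy, hxy])
  · rintro h _ ⟨_, ⟨x, rfl⟩, hx0, rfl⟩
    have hx : x ≠ 0 := by rintro rfl; exact hx0 (map_zero ψ)
    refine (finrank_inf_span_singleton_eq_one_iff (LinearMap.mem_range_self ψ x) hx0).2
      (le_antisymm ?_ ?_)
    · rintro _ ⟨⟨y, rfl⟩, hyx⟩
      obtain rfl | hy := eq_or_ne y 0
      · simp only [map_zero, zero_mem]
      have hyx' : L ∙ ψ y = L ∙ ψ x :=
        (eq_span_singleton_of_mem (P := L ∙ ψ x) (finrank_span_singleton hx0) hyx (hψ0 hy)).symm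
      have hyK : y ∈ K ∙ x := h y x hy hx hyx' ▸ mem_span_singleton_self y
      rw [← Set.image_singleton, ← map_span]
      exact mem_map_of_mem hyK
    · exact (span_singleton_le_iff_mem _ _).2 ⟨⟨x, rfl⟩, mem_span_singleton_self _⟩

open scoped LinearAlgebra.Projectivization in
lemma isScattered_iff_ncard_BSet [Finite K] {A : Submodule K W} [FiniteDimensional K A] :
    IsScattered L A ↔
      (BSet L (A : Set W)).ncard = ∑ i ∈ Finset.range (finrank K A), Nat.card K ^ i := by
  have : Finite A := Module.finite_of_finite K
  let toPoint : ℙ K A → Submodule L W := fun p => L ∙ (p.rep : W)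
  have hmk (x : A) (hx : x ≠ 0) : toPoint (.mk K x hx) = L ∙ (x : W) := by
    refine span_singleton_map_eq_of_span_singleton_eq A.subtype ?_
    rw [← Projectivization.submodule_eq, Projectivization.submodule_mk]
  have hrange : toPoint '' Set.univ = BSet L (A : Set W) := by
    rw [Set.image_univ]
    ext P
    constructor
    · rintro ⟨p, rfl⟩
      exact ⟨p.rep, p.rep.2, by simpa using p.rep_nonzero, rfl⟩
    · rintro ⟨x, hx, hx0, rfl⟩
      exact ⟨_, hmk ⟨x, hx⟩ (by simpa using hx0)⟩
  have hinj : IsScattered L A ↔ Set.InjOn toPoint Set.univ := by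
    have hrangeA := isScattered_range_iff (L := L) A.injective_subtype
    rw [range_subtype] at hrangeA
    rw [Set.injOn_univ, hrangeA]
    refine ⟨fun h p q hpq => ?_, fun h x y hx hy hxy => ?_⟩
    · apply Projectivization.submodule_injective
      rw [p.submodule_eq, q.submodule_eq]
      exact h _ _ p.rep_nonzero q.rep_nonzero hpq
    · rw [← Projectivization.submodule_mk x hx, ← Projectivization.submodule_mk y hy]
      exact congrArg _ (h ((hmk x hx).trans (hxy.trans (hmk y hy).symm)))
  rw [hinj, ← Set.ncard_image_iff Set.finite_univ, hrange, Set.ncard_univ,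
    Projectivization.card_of_finrank K A rfl]

lemma isScattered_iff_of_BSet_eq [Finite K] {A B : Submodule K W} [FiniteDimensional K A]
    [FiniteDimensional K B] (hrank : finrank K A = finrank K B)
    (hB : BSet L (A : Set W) = BSet L (B : Set W)) : IsScattered L A ↔ IsScattered L B := by
  rw [isScattered_iff_ncard_BSet, isScattered_iff_ncard_BSet, hrank, hB]

end LinearSet

section Hyperplane

variable {K W : Type*} [Field K] [AddCommGroup W] [Module K W] {V : Submodule K W}

/-- The hyperplane of the subgeometry `B(V)` on which the functional `f ≠ 0` on `V` vanishes, as a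
subspace of the ambient space `W`. -/
def hyperplane (f : Dual K V) : Submodule K W :=
  (LinearMap.ker f).map V.subtype

lemma hyperplane_eq_iff {f g : Dual K V} : hyperplane f = hyperplane g ↔ K ∙ f = K ∙ g := by
  have mem_span {f g : Dual K V} (h : LinearMap.ker g ≤ LinearMap.ker f) : f ∈ K ∙ g := by
    have : f ∈ span K (Set.range fun _ : Unit => g) := mem_span_of_iInf_ker_le_ker (by simpa)
    rwa [Set.range_const] at this
  have ker_le {f g : Dual K V} (h : K ∙ f = K ∙ g) : LinearMap.ker g ≤ LinearMap.ker f := by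
    obtain ⟨c, rfl⟩ := mem_span_singleton.1 (h ▸ mem_span_singleton_self f)
    exact LinearMap.ker_le_ker_smul g c
  rw [hyperplane, hyperplane, (map_injective_of_injective V.injective_subtype).eq_iff]
  refine ⟨fun h => le_antisymm ?_ ?_, fun h => le_antisymm (ker_le h.symm) (ker_le h)⟩
  · exact (span_singleton_le_iff_mem _ _).2 (mem_span h.ge)
  · exact (span_singleton_le_iff_mem _ _).2 (mem_span h.le)

lemma coe_mem_hyperplane {f : Dual K V} {v : V} : (v : W) ∈ hyperplane f ↔ f v = 0 := by
  simp [hyperplane]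

variable [FiniteDimensional K V]

lemma finrank_hyperplane {f : Dual K V} (hf : f ≠ 0) :
    finrank K (hyperplane f) = finrank K V - 1 := by
  rw [hyperplane, finrank_map_subtype_eq, ← Module.Dual.finrank_ker_add_one_of_ne_zero hf,
    Nat.add_sub_cancel]

lemma le_and_finrank_eq_iff_exists_hyperplane [Nontrivial V] {H : Submodule K W} :
    H ≤ V ∧ finrank K H = finrank K V - 1 ↔ ∃ f : Dual K V, f ≠ 0 ∧ H = hyperplane f := by
  constructor
  · rintro ⟨hHV, hH⟩
    have hlt : H.comap V.subtype < ⊤ := by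
      refine lt_top_iff_ne_top.2 fun htop => ?_
      have hV : 0 < finrank K V := finrank_pos
      rw [le_antisymm hHV (comap_subtype_eq_top.1 htop)] at hH
      omega
    obtain ⟨f, hf, hle⟩ := exists_le_ker_of_lt_top _ hlt
    have hHf : H ≤ hyperplane f := fun x hx => coe_mem_hyperplane.2 (hle (x := ⟨x, hHV hx⟩) hx)
    have : FiniteDimensional K (hyperplane f) := finiteDimensional_of_le (map_subtype_le _ _)
    exact ⟨f, hf, eq_of_le_of_finrank_eq hHf (by rw [hH, finrank_hyperplane hf])⟩
  · rintro ⟨f, hf, rfl⟩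
    exact ⟨map_subtype_le _ _, finrank_hyperplane hf⟩

end Hyperplane

section BaseChange

variable {K L W : Type*} [Field K] [Field L] [Algebra K L] [AddCommGroup W] [Module L W]
  [Module K W] [IsScalarTower K L W] {V : Submodule K W}

lemma isBaseChange_subtype [FiniteDimensional K V] (hrank : finrank K V = finrank L W)
    (hspan : span L (V : Set W) = ⊤) : IsBaseChange L V.subtype := by
  let b := finBasis K V
  have hb : ⊤ ≤ span L (Set.range fun i => (b i : W)) := by
    rw [← span_span_of_tower K, Set.range_comp' Subtype.val b, ← coe_subtype, ← map_span,
      b.span_eq, map_subtype_top, hspan]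
  let B := basisOfTopLeSpanOfCardEqFinrank _ hb (by rw [Fintype.card_fin, hrank])
  convert (IsBaseChange.of_basis K B).comp_equiv b.repr
  refine b.ext fun i => ?_
  simp [B]

lemma span_hyperplane (hV : IsBaseChange L V.subtype) {f : Dual K V} (hf : f ≠ 0) :
    span L (hyperplane f : Set W) = LinearMap.ker (hV.toDual f) := by
  apply le_antisymm
  · rw [span_le]
    rintro _ ⟨v, hv, rfl⟩
    rw [SetLike.mem_coe, LinearMap.mem_ker, hV.toDual_comp_apply, LinearMap.mem_ker.1 hv, map_zero]
  · obtain ⟨v₀, hv₀⟩ : ∃ v, f v = 1 := LinearMap.surjective hf 1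
    -- Modulo the extension of `ker f`, every vector is its value under `f` times `v₀`.
    let Q := span L (hyperplane f : Set W)
    have hmkQ : Q.mkQ = (hV.toDual f).smulRight (Q.mkQ v₀) := by
      refine hV.algHom_ext _ _ fun v => ?_
      have hmem : ((v - f v • v₀ : V) : W) ∈ Q :=
        subset_span (coe_mem_hyperplane.2 (by simp [hv₀]))
      rw [LinearMap.smulRight_apply, hV.toDual_comp_apply, algebraMap_smul, ← sub_eq_zero]
      simpa using (Quotient.mk_eq_zero Q).2 hmem
    intro w hw
    rw [← Quotient.mk_eq_zero Q, ← mkQ_apply, hmkQ, LinearMap.smulRight_apply,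
      LinearMap.mem_ker.1 hw, zero_smul]

end BaseChange

section KerVector

variable {L M : Type*} [Field L] [AddCommGroup M] [Module L M]

/-- A vector spanning the kernel of a nonzero functional on a plane, chosen so as to depend
linearly on the functional. -/
noncomputable def kerVector (b : Basis (Fin 2) L M) : Dual L M →ₗ[L] M :=
  (Dual.eval L M (b 1)).smulRight (b 0) - (Dual.eval L M (b 0)).smulRight (b 1)

variable (b : Basis (Fin 2) L M)

lemma kerVector_apply (F : Dual L M) : kerVector b F = F (b 1) • b 0 - F (b 0) • b 1 := rfl

lemma kerVector_mem_ker (F : Dual L M) : kerVector b F ∈ LinearMap.ker F := by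
  simp [kerVector_apply, mul_comm]

lemma kerVector_injective : Function.Injective (kerVector b) := by
  refine (injective_iff_map_eq_zero _).2 fun F hF => b.ext fun i => ?_
  have h0 := congrArg (fun x => b.repr x 0) hF
  have h1 := congrArg (fun x => b.repr x 1) hF
  fin_cases i
  · simpa [kerVector_apply] using h1
  · simpa [kerVector_apply] using h0

lemma ker_eq_span_kerVector {F : Dual L M} (hF : F ≠ 0) :
    LinearMap.ker F = L ∙ kerVector b F := by
  have : FiniteDimensional L M := b.finiteDimensional_of_finite
  have hrank : finrank L (LinearMap.ker F) = 1 := by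
    have := Module.Dual.finrank_ker_add_one_of_ne_zero hF
    rw [finrank_eq_card_basis b, Fintype.card_fin] at this
    omega
  exact eq_span_singleton_of_mem hrank (kerVector_mem_ker b F)
    ((map_ne_zero_iff _ (kerVector_injective b)).2 hF)

end KerVector

section SplashMap

variable {K L W : Type*} [Field K] [Field L] [Algebra K L] [AddCommGroup W] [Module L W]
  [Module K W] [IsScalarTower K L W] {V : Submodule K W} {U : Submodule L W}

/-- The map `ψ` sending a functional `f` on `V` to a vector that spans the point in which the line
`PG(U)` meets the extension of the hyperplane `ker f`. The basis of `U` only affects `ψ` up to a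
common scalar factor. -/
noncomputable def splashMap (hV : IsBaseChange L V.subtype) (b : Basis (Fin 2) L U) :
    Dual K V →ₗ[K] W :=
  ((U.subtype ∘ₗ kerVector b ∘ₗ U.subtype.dualMap).restrictScalars K) ∘ₗ hV.toDual

variable (hV : IsBaseChange L V.subtype) (b : Basis (Fin 2) L U)

lemma splashMap_apply (f : Dual K V) :
    splashMap hV b f = kerVector b (hV.toDual f ∘ₗ U.subtype) := rfl

lemma splashMap_mem (f : Dual K V) : splashMap hV b f ∈ U := by
  rw [splashMap_apply]
  exact Subtype.property _

lemma toDual_comp_subtype_ne_zero {f : Dual K V} (hf : f ≠ 0)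
    (hU : ¬ U ≤ span L (hyperplane f : Set W)) : hV.toDual f ∘ₗ U.subtype ≠ 0 := by
  rw [span_hyperplane hV hf] at hU
  exact fun h => hU fun u hu => LinearMap.congr_fun h ⟨u, hu⟩

variable (hext : ∀ f : Dual K V, f ≠ 0 → ¬ U ≤ span L (hyperplane f : Set W))
include hext

lemma splashMap_injective : Function.Injective (splashMap hV b) := by
  refine (injective_iff_map_eq_zero _).2 fun f h => ?_
  by_contra hf
  refine toDual_comp_subtype_ne_zero hV hf (hext f hf) (kerVector_injective b ?_)
  rw [map_zero]
  exact Subtype.ext h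

lemma splashMap_ne_zero {f : Dual K V} (hf : f ≠ 0) : splashMap hV b f ≠ 0 :=
  (map_ne_zero_iff _ (splashMap_injective hV b hext)).2 hf

lemma inf_span_hyperplane {f : Dual K V} (hf : f ≠ 0) :
    U ⊓ span L (hyperplane f : Set W) = L ∙ splashMap hV b f := by
  have hker := ker_eq_span_kerVector b (toDual_comp_subtype_ne_zero hV hf (hext f hf))
  rw [span_hyperplane hV hf, ← map_comap_subtype, ← LinearMap.ker_comp, hker, map_span,
    Set.image_singleton]
  rfl

lemma le_span_hyperplane_iff {P : Submodule L W} (hP : finrank L P = 1) (hPU : P ≤ U)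
    {f : Dual K V} (hf : f ≠ 0) :
    P ≤ span L (hyperplane f : Set W) ↔ P = L ∙ splashMap hV b f := by
  have hinf := inf_span_hyperplane hV b hext hf
  constructor
  · intro h
    have hle : P ≤ L ∙ splashMap hV b f := hinf ▸ le_inf hPU h
    exact eq_of_le_of_finrank_eq hle
      (by rw [hP, finrank_span_singleton (splashMap_ne_zero hV b hext hf)])
  · rintro rfl
    exact hinf.ge.trans inf_le_right

variable [FiniteDimensional K V]

lemma mem_splash_iff [Nontrivial V] {P : Submodule L W} :
    P ∈ Splash K L V U (finrank K V) ↔ ∃ f : Dual K V, f ≠ 0 ∧ P = L ∙ splashMap hV b f := by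
  constructor
  · rintro ⟨hP, hPU, H, hHV, hH, hPH⟩
    obtain ⟨f, hf, rfl⟩ := le_and_finrank_eq_iff_exists_hyperplane.1 ⟨hHV, hH⟩
    exact ⟨f, hf, (le_span_hyperplane_iff hV b hext hP hPU hf).1 hPH⟩
  · rintro ⟨f, hf, rfl⟩
    have hP := finrank_span_singleton (K := L) (splashMap_ne_zero hV b hext hf)
    have hPU : L ∙ splashMap hV b f ≤ U :=
      (span_singleton_le_iff_mem _ _).2 (splashMap_mem hV b f)
    exact ⟨hP, hPU, hyperplane f, map_subtype_le _ _, finrank_hyperplane hf,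
      (le_span_hyperplane_iff hV b hext hP hPU hf).2 rfl⟩

lemma splash_eq_BSet_range [Nontrivial V] :
    Splash K L V U (finrank K V) = BSet L (LinearMap.range (splashMap hV b) : Set W) := by
  ext P
  rw [mem_splash_iff hV b hext]
  constructor
  · rintro ⟨f, hf, rfl⟩
    exact ⟨_, LinearMap.mem_range_self _ f, splashMap_ne_zero hV b hext hf, rfl⟩
  · rintro ⟨_, ⟨f, rfl⟩, hf, rfl⟩
    exact ⟨f, fun h => hf (by rw [h, map_zero]), rfl⟩

lemma isScattered_range_splashMap_iff [Nontrivial V] :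
    IsScattered L (LinearMap.range (splashMap hV b)) ↔
      ∀ P ∈ Splash K L V U (finrank K V), ∃! H : Submodule K W,
        H ≤ V ∧ finrank K H = finrank K V - 1 ∧ P ≤ span L (H : Set W) := by
  rw [isScattered_range_iff (splashMap_injective hV b hext)]
  constructor
  · rintro h P ⟨hP, hPU, H, hHV, hH, hPH⟩
    refine ⟨H, ⟨hHV, hH, hPH⟩, ?_⟩
    rintro H' ⟨hHV', hH', hPH'⟩
    obtain ⟨f, hf, rfl⟩ := le_and_finrank_eq_iff_exists_hyperplane.1 ⟨hHV, hH⟩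
    obtain ⟨g, hg, rfl⟩ := le_and_finrank_eq_iff_exists_hyperplane.1 ⟨hHV', hH'⟩
    rw [le_span_hyperplane_iff hV b hext hP hPU hf] at hPH
    rw [le_span_hyperplane_iff hV b hext hP hPU hg] at hPH'
    exact hyperplane_eq_iff.2 (h g f hg hf (hPH'.symm.trans hPH))
  · intro h f g hf hg hfg
    have hP := (mem_splash_iff hV b hext).2 ⟨f, hf, rfl⟩
    have hthrough {k : Dual K V} (hk : k ≠ 0) (hfk : L ∙ splashMap hV b f = L ∙ splashMap hV b k) :
        hyperplane k ≤ V ∧ finrank K (hyperplane k) = finrank K V - 1 ∧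
          L ∙ splashMap hV b f ≤ span L (hyperplane k : Set W) :=
      ⟨map_subtype_le _ _, finrank_hyperplane hk,
        (le_span_hyperplane_iff hV b hext hP.1 hP.2.1 hk).2 hfk⟩
    exact hyperplane_eq_iff.1 ((h _ hP).unique (hthrough hf rfl) (hthrough hg hfg))

lemma disjoint_of_isScattered (hr : 3 ≤ finrank K V)
    (hscat : IsScattered L (LinearMap.range (splashMap hV b))) :
    Disjoint V (U.restrictScalars K) := by
  rw [disjoint_def]
  intro v hv hvU
  by_contra hv0
  have hP := finrank_span_singleton (K := L) hv0
  let A : Submodule K (Dual K V) := (K ∙ (⟨v, hv⟩ : V)).dualAnnihilator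
  have hspan {f : Dual K V} (hfA : f ∈ A) (hf : f ≠ 0) : L ∙ v = L ∙ splashMap hV b f := by
    have hvf : v ∈ hyperplane f :=
      coe_mem_hyperplane.2 ((mem_dualAnnihilator f).1 hfA ⟨v, hv⟩ (mem_span_singleton_self _))
    exact (le_span_hyperplane_iff hV b hext hP ((span_singleton_le_iff_mem _ _).2 hvU) hf).1
      ((span_singleton_le_iff_mem _ _).2 (subset_span hvf))
  have hA : 1 < finrank K A := by
    have hsum : finrank K (K ∙ (⟨v, hv⟩ : V)) + finrank K A = finrank K V :=
      Subspace.finrank_add_finrank_dualAnnihilator_eq _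
    rw [finrank_span_singleton (by simpa using hv0)] at hsum
    omega
  obtain ⟨f, hfA, hf⟩ := A.exists_mem_ne_zero_of_ne_bot fun h => by
    rw [h, finrank_bot] at hA
    omega
  have hle : A ≤ K ∙ f := by
    intro g hgA
    obtain rfl | hg := eq_or_ne g 0
    · exact zero_mem _
    · rw [(isScattered_range_iff (splashMap_injective hV b hext)).1 hscat f g hf hg
        ((hspan hfA hf).symm.trans (hspan hgA hg))]
      exact mem_span_singleton_self g
  exact hA.not_ge ((finrank_mono hle).trans_eq (finrank_span_singleton hf))

end SplashMap

theorem scattered_iff_external_general {K L W : Type*} [Field K] [Finite K] [Field L] [Algebra K L]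
    [AddCommGroup W] [Module L W] [Module K W] [IsScalarTower K L W] {r : ℕ} (hr : 3 ≤ r)
    {V : Submodule K W} (hVrank : finrank K V = r) (hWrank : finrank L W = r)
    (hVspan : span L (V : Set W) = ⊤) {U : Submodule L W} (hU : finrank L U = 2)
    (hext : ∀ H : Submodule K W, H ≤ V → finrank K H = r - 1 → ¬ U ≤ span L (H : Set W)) :
    (∃ U' : Submodule K W, U' ≤ U.restrictScalars K ∧ finrank K U' = r ∧
        BSet L (U' : Set W) = Splash K L V U r ∧
        ∀ x ∈ Splash K L V U r, finrank K ↥(U' ⊓ x.restrictScalars K) = 1) ↔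
      ((∀ P ∈ BSet L (V : Set W), ¬ P ≤ U) ∧
        ∀ x ∈ Splash K L V U r, ∃! H : Submodule K W,
          H ≤ V ∧ finrank K H = r - 1 ∧ x ≤ span L (H : Set W)) := by
  subst hVrank
  have : FiniteDimensional K V := .of_finrank_pos (by omega)
  have : Nontrivial V := nontrivial_of_finrank_pos (R := K) (by omega)
  have hV : IsBaseChange L V.subtype := isBaseChange_subtype hWrank.symm hVspan
  have : FiniteDimensional L U := .of_finrank_pos (by omega)
  let b := finBasisOfFinrankEq L U hU
  let ψ := splashMap hV b
  have hext' (f : Dual K V) (hf : f ≠ 0) : ¬ U ≤ span L (hyperplane f : Set W) :=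
    hext _ (map_subtype_le _ _) (finrank_hyperplane hf)
  have hψrank : finrank K (LinearMap.range ψ) = finrank K V := by
    rw [LinearMap.finrank_range_of_inj (splashMap_injective hV b hext'), Subspace.dual_finrank_eq]
  have hS : Splash K L V U (finrank K V) = BSet L (LinearMap.range ψ : Set W) :=
    splash_eq_BSet_range hV b hext'
  rw [← isScattered_range_splashMap_iff hV b hext']
  constructor
  · rintro ⟨U', -, hU'rank, hU'S, hU'⟩
    have : FiniteDimensional K U' := .of_finrank_pos (by omega)
    have hscat : IsScattered L (LinearMap.range ψ) :=
      (isScattered_iff_of_BSet_eq (hU'rank.trans hψrank.symm) (hU'S.trans hS)).1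
        (by rwa [IsScattered, hU'S])
    refine ⟨?_, hscat⟩
    rintro _ ⟨v, hv, hv0, rfl⟩ hvU
    exact hv0 (disjoint_def.1 (disjoint_of_isScattered hV b hext' hr hscat) v hv
      (hvU (mem_span_singleton_self v)))
  · rintro ⟨-, hscat⟩
    refine ⟨LinearMap.range ψ, ?_, hψrank, hS.symm, hS ▸ hscat⟩
    rintro _ ⟨f, rfl⟩
    exact splashMap_mem hV b f

/-- a splash is a scattered linear set if and only if it is an external
splash in which every point lies on exactly one hyperplane of the subgeometry. -/
theorem scattered_iff_external
    (K L : Type*) [Field K] [Field L] [Algebra K L] [Fintype K] [Fintype L]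
    (r n : ℕ) (hr : 3 ≤ r) (hn : 2 ≤ n) (hrank : Module.finrank K L = n)
    (V : Submodule K (Fin r → L))
    (hVrank : Module.finrank K V = r)
    (hVspan : Submodule.span L (V : Set (Fin r → L)) = ⊤)
    (U : Submodule L (Fin r → L)) (hU : Module.finrank L U = 2)
    (hext : ∀ H : Submodule K (Fin r → L), H ≤ V → Module.finrank K H = r - 1 →
      ¬ U ≤ Submodule.span L (H : Set (Fin r → L))) :
    (∃ U' : Submodule K (Fin r → L), U' ≤ U.restrictScalars K ∧
        Module.finrank K U' = r ∧
        BSet L (U' : Set (Fin r → L)) = Splash K L V U r ∧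
        ∀ x ∈ Splash K L V U r,
          Module.finrank K ↥(U' ⊓ x.restrictScalars K) = 1) ↔
      ((∀ P ∈ BSet L (V : Set (Fin r → L)), ¬ P ≤ U) ∧
        ∀ x ∈ Splash K L V U r,
          ∃! H : Submodule K (Fin r → L),
            H ≤ V ∧ Module.finrank K H = r - 1 ∧
              x ≤ Submodule.span L (H : Set (Fin r → L))) :=
  scattered_iff_external_general hr hVrank (Module.finrank_fin_fun L) hVspan hU hext
end

section
/- Let 3 ≤ r ≤ n, let T be a point of PG(1,q^n) and A a set of q^{r-1} points of PG(1,q^n) with T ∉ A. Suppose there exists an r-dimensional K-subspace U₀ of L^2 with B(U₀) = {T} ∪ A and dim_K(U₀ ∩ T) = r-1 (i.e. {T} ∪ A is an F_q-club of rank r with head T). Then for any two distinct points P, Q ∈ A, the unique q-subline through T, P, Q is contained in {T} ∪ A; equivalently, for every 2-dimensional K-subspace M of L^2 such that B(M) has cardinality q+1 and T, P, Q ∈ B(M), one has B(M) ⊆ {T} ∪ A. -/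
open Submodule Module

/-!
An `F_q`-club and a `q`-subline through its head `T` are both given by `K`-subspaces that meet `T`
in a hyperplane of themselves. If the point set of such a subspace contains distinct points
`P, Q ≠ T`, the subspace contains vectors `s, u` with `T = ⟨s⟩`, `P = ⟨u⟩`, `Q = ⟨s + u⟩`. The three
points determine the pair `s, u` up to a common factor `c` in `L`, so the subspace of the subline is
`c` times the `K`-span of a pair taken from the subspace of the club.
-/

theorem span_singleton_eq_of_isAtom {R M : Type*} [Semiring R] [AddCommMonoid M] [Module R M]
    {N : Submodule R M} (hN : IsAtom N) {x : M} (hx : x ∈ N) (hx0 : x ≠ 0) : (R ∙ x) = N :=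
  (hN.le_iff_eq (span_singleton_eq_bot.not.2 hx0)).1 ((span_singleton_le_iff_mem x N).2 hx)

section LinearAlgebra

variable {K V : Type*} [DivisionRing K] [AddCommGroup V] [Module K V]
  {S U : Submodule K V} {x y : V}

theorem covBy_of_finrank_eq_add_one (hSU : S ≤ U) (h : finrank K U = finrank K S + 1) : S ⋖ U := by
  have : Module.Finite K U := Module.finite_of_finrank_eq_succ h
  refine ⟨lt_of_le_of_ne hSU (by rintro rfl; omega), fun X hSX hXU => ?_⟩
  have : Module.Finite K X := finiteDimensional_of_le hXU.le
  have hSX' := finrank_lt_finrank_of_lt hSX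
  have hXU' := finrank_lt_finrank_of_lt hXU
  omega

theorem span_singleton_sup_eq_of_covBy (h : S ⋖ U) (hxU : x ∈ U) (hxS : x ∉ S) :
    (K ∙ x) ⊔ S = U :=
  (h.eq_or_eq le_sup_right (sup_le ((span_singleton_le_iff_mem x U).2 hxU) h.le)).resolve_left
    (covBy_span_singleton_sup hxS).ne'

theorem span_singleton_covBy_of_finrank_eq_two (hU : finrank K U = 2) (hx : x ∈ U) (hx0 : x ≠ 0) :
    (K ∙ x) ⋖ U :=
  covBy_of_finrank_eq_add_one ((span_singleton_le_iff_mem x U).2 hx)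
    (by rw [hU, finrank_span_singleton hx0])

theorem span_pair_eq_of_finrank_eq_two (hU : finrank K U = 2) (hx : x ∈ U) (hy : y ∈ U)
    (hxy : LinearIndependent K ![x, y]) : span K {x, y} = U := by
  have : Module.Finite K U := Module.finite_of_finrank_eq_succ hU
  refine eq_of_le_of_finrank_eq (span_le.2 (Set.pair_subset hx hy)) ?_
  rw [hU, ← Matrix.range_cons_cons_empty x y ![], finrank_span_eq_card hxy, Fintype.card_fin]

theorem exists_smul_eq_of_span_singleton_eq {s u s' u' : V}
    (hsu : LinearIndependent K ![s, u]) (hs : (K ∙ s) = K ∙ s') (hu : (K ∙ u) = K ∙ u')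
    (hadd : (K ∙ (s + u)) = K ∙ (s' + u')) : ∃ c : K, c ≠ 0 ∧ c • s = s' ∧ c • u = u' := by
  obtain ⟨a, rfl⟩ := span_singleton_eq_span_singleton.1 hs
  obtain ⟨b, rfl⟩ := span_singleton_eq_span_singleton.1 hu
  obtain ⟨c, hc⟩ := span_singleton_eq_span_singleton.1 hadd
  have hcoeff : ((c : K) - a) • s + ((c : K) - b) • u = 0 := by
    simp only [Units.smul_def] at hc
    rw [← sub_eq_zero.2 hc]
    simp only [sub_smul, smul_add]
    abel
  obtain ⟨hca, hcb⟩ := LinearIndependent.pair_iff.1 hsu _ _ hcoeff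
  obtain rfl : c = a := Units.ext (sub_eq_zero.1 hca)
  obtain rfl : c = b := Units.ext (sub_eq_zero.1 hcb)
  exact ⟨c, c.ne_zero, rfl, rfl⟩

end LinearAlgebra

section Points

variable {L W : Type*} [Field L] [AddCommGroup W] [Module L W] {T P : Submodule L W}

theorem isAtom_of_mem_bSet {X : Set W} (hP : P ∈ BSet L X) : IsAtom P := by
  obtain ⟨x, -, hx0, rfl⟩ := hP
  exact nonzero_span_atom x hx0

theorem exists_mem_notMem_of_mem_bSet {X : Set W} (hT : IsAtom T) (hP : P ∈ BSet L X)
    (hPT : P ≠ T) : ∃ x ∈ X, x ∉ T ∧ (L ∙ x) = P := by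
  obtain ⟨x, hxX, hx0, rfl⟩ := hP
  exact ⟨x, hxX, fun hxT => hPT (span_singleton_eq_of_isAtom hT hxT hx0), rfl⟩

theorem bSet_mono {X Y : Set W} (h : X ⊆ Y) : BSet L X ⊆ BSet L Y :=
  fun _ ⟨x, hx, hx0, hP⟩ => ⟨x, h hx, hx0, hP⟩

open scoped Pointwise in
theorem bSet_smul {c : L} (hc : c ≠ 0) (X : Set W) : BSet L (c • X) = BSet L X := by
  have smul_subset {d : L} (hd : d ≠ 0) (Y : Set W) : BSet L (d • Y) ⊆ BSet L Y := by
    rintro _ ⟨_, ⟨y, hy, rfl⟩, hy0, rfl⟩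
    exact ⟨y, hy, right_ne_zero_of_smul hy0, span_singleton_smul_eq (IsUnit.mk0 d hd) y⟩
  refine (smul_subset hc X).antisymm ?_
  simpa only [inv_smul_smul₀ hc] using smul_subset (inv_ne_zero hc) (c • X)

end Points

section Club

variable {K L W : Type*} [Field K] [Field L] [Algebra K L] [AddCommGroup W] [Module K W]
  [Module L W] [IsScalarTower K L W] {T P Q : Submodule L W} {U M : Submodule K W}

/-- The `K`-subspace `U` defines a club with head `T`: it meets `T` in a hyperplane of `U`.
The rank of `U` is not bounded below, so that `q`-sublines through `T` count as clubs too. -/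
def IsClubWithHead (T : Submodule L W) (U : Submodule K W) : Prop :=
  U ⊓ T.restrictScalars K ⋖ U

theorem isClubWithHead_of_finrank_eq_two (hM : finrank K M = 2) (hTM : T ∈ BSet L (M : Set W))
    (hPM : P ∈ BSet L (M : Set W)) (hPT : P ≠ T) : IsClubWithHead T M := by
  have hT := isAtom_of_mem_bSet hTM
  obtain ⟨t, htM, ht0, rfl⟩ := hTM
  obtain ⟨m, hmM, hmT, -⟩ := exists_mem_notMem_of_mem_bSet hT hPM hPT
  have hcov := span_singleton_covBy_of_finrank_eq_two hM htM ht0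
  have hle : (K ∙ t) ≤ M ⊓ (L ∙ t).restrictScalars K :=
    (span_singleton_le_iff_mem t _).2 ⟨htM, mem_span_singleton_self t⟩
  have hne : M ⊓ (L ∙ t).restrictScalars K ≠ M := fun h => hmT (inf_eq_left.1 h hmM)
  rwa [IsClubWithHead, (hcov.eq_or_eq hle inf_le_left).resolve_right hne]

theorem IsClubWithHead.exists_span_singleton_eq (hU : IsClubWithHead T U) (hT : IsAtom T)
    (hP : P ∈ BSet L (U : Set W)) (hQ : Q ∈ BSet L (U : Set W))
    (hPT : P ≠ T) (hQT : Q ≠ T) (hPQ : P ≠ Q) :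
    ∃ s ∈ U, ∃ u ∈ U, LinearIndependent L ![s, u] ∧
      (L ∙ s) = T ∧ (L ∙ u) = P ∧ (L ∙ (s + u)) = Q := by
  obtain ⟨u, huU, huT, rfl⟩ := exists_mem_notMem_of_mem_bSet hT hP hPT
  obtain ⟨v, hvU, hvT, rfl⟩ := exists_mem_notMem_of_mem_bSet hT hQ hQT
  have hv : v ∈ (K ∙ u) ⊔ (U ⊓ T.restrictScalars K) := by
    rwa [span_singleton_sup_eq_of_covBy hU huU fun h => huT h.2]
  obtain ⟨_, hau, t, ht, rfl⟩ := mem_sup.1 hv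
  obtain ⟨a, rfl⟩ := mem_span_singleton.1 hau
  have ha : a ≠ 0 := by
    rintro rfl
    exact hvT (by simpa using ht.2)
  have hQs : (L ∙ (a⁻¹ • t + u)) = L ∙ (a • u + t) := by
    have hsmul : a • u + t = algebraMap K L a • (a⁻¹ • t + u) := by
      rw [algebraMap_smul, smul_add, smul_inv_smul₀ ha, add_comm]
    rw [hsmul, span_singleton_smul_eq ((IsUnit.mk0 a ha).map (algebraMap K L))]
  have hs0 : a⁻¹ • t ≠ 0 := fun h => hPQ (by rw [← hQs, h, zero_add])
  have hs : a⁻¹ • t ∈ U ⊓ T.restrictScalars K := smul_mem _ _ ht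
  have hsu : LinearIndependent L ![a⁻¹ • t, u] :=
    (LinearIndependent.pair_iff' hs0).2 fun d hd => huT (hd ▸ T.smul_mem d hs.2)
  exact ⟨_, hs.1, u, huU, hsu, span_singleton_eq_of_isAtom hT hs.2 hs0, rfl, hQs⟩

open scoped Pointwise in
theorem club_contains_sublines_general (hU : IsClubWithHead T U) (hPU : P ∈ BSet L (U : Set W))
    (hQU : Q ∈ BSet L (U : Set W)) (hPT : P ≠ T) (hQT : Q ≠ T) (hPQ : P ≠ Q)
    (hM : finrank K M = 2) (hTM : T ∈ BSet L (M : Set W)) (hPM : P ∈ BSet L (M : Set W))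
    (hQM : Q ∈ BSet L (M : Set W)) : BSet L (M : Set W) ⊆ BSet L (U : Set W) := by
  have hT := isAtom_of_mem_bSet hTM
  have hMT := isClubWithHead_of_finrank_eq_two hM hTM hPM hPT
  obtain ⟨s, hsU, u, huU, hsu, rfl, rfl, rfl⟩ :=
    hU.exists_span_singleton_eq hT hPU hQU hPT hQT hPQ
  obtain ⟨s', hsM, u', huM, hsu', hs, hu, hadd⟩ :=
    hMT.exists_span_singleton_eq hT hPM hQM hPT hQT hPQ
  obtain ⟨c, hc, rfl, rfl⟩ :=
    exists_smul_eq_of_span_singleton_eq hsu hs.symm hu.symm hadd.symm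
  have hM_eq : M = c • span K {s, u} := by
    rw [smul_span, Set.smul_set_insert, Set.smul_set_singleton,
      span_pair_eq_of_finrank_eq_two hM hsM huM (hsu'.restrict_scalars' K)]
  rw [hM_eq, coe_pointwise_smul, bSet_smul hc]
  exact bSet_mono (span_le.2 (Set.pair_subset hsU huU))

end Club

/-- in an `F_q`-club `{T} ∪ A` of rank `r` with head `T`, the `q`-subline
through `T` and any two distinct points of `A` is contained in `{T} ∪ A`. -/
theorem club_contains_sublines
    (K L : Type*) [Field K] [Field L] [Algebra K L] [Fintype K] [Fintype L]
    (q r n : ℕ) (hq : Fintype.card K = q)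
    (hr : 3 ≤ r) (hrn : r ≤ n) (hrank : Module.finrank K L = n)
    (T : Submodule L (Fin 2 → L)) (hT : Module.finrank L T = 1)
    (A : Set (Submodule L (Fin 2 → L)))
    (hA : ∀ P ∈ A, Module.finrank L P = 1)
    (hAcard : A.ncard = q ^ (r - 1)) (hTA : T ∉ A)
    (U₀ : Submodule K (Fin 2 → L)) (hU₀ : Module.finrank K U₀ = r)
    (hU₀B : BSet L (U₀ : Set (Fin 2 → L)) = insert T A)
    (hU₀T : Module.finrank K ↥(U₀ ⊓ T.restrictScalars K) = r - 1) :
    ∀ P ∈ A, ∀ Q ∈ A, P ≠ Q →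
      ∀ M : Submodule K (Fin 2 → L), Module.finrank K M = 2 →
        (BSet L (M : Set (Fin 2 → L))).ncard = q + 1 →
        T ∈ BSet L (M : Set (Fin 2 → L)) →
        P ∈ BSet L (M : Set (Fin 2 → L)) →
        Q ∈ BSet L (M : Set (Fin 2 → L)) →
        BSet L (M : Set (Fin 2 → L)) ⊆ insert T A := by
  intro P hP Q hQ hPQ M hM _ hTM hPM hQM
  have hclub : IsClubWithHead T U₀ := covBy_of_finrank_eq_add_one inf_le_left (by omega)
  have hAU : A ⊆ BSet L (U₀ : Set (Fin 2 → L)) := hU₀B ▸ Set.subset_insert T A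
  rw [← hU₀B]
  exact club_contains_sublines_general hclub (hAU hP) (hAU hQ) (ne_of_mem_of_not_mem hP hTA)
    (ne_of_mem_of_not_mem hQ hTA) hPQ hM hTM hPM hQM
end

section
/- Let 3 ≤ r ≤ n with gcd(n, r-1) = 1. Let π₀ = B(V₀) and π₁ = B(V₁) be q-subgeometries of PG(r-1,q^n), and let l_∞ = PG(U) be a line tangent to both π₀ and π₁ and not contained in the extension of any hyperplane of π₀ or of π₁. Suppose S(π₀,l_∞) = S(π₁,l_∞), with common centre T, and suppose there exist a hyperplane of π₀ and a hyperplane of π₁ having the same point set H₀ (i.e. K-subspaces H ⊆ V₀ and H' ⊆ V₁ of K-dimension r-1 with B(H) = B(H') = H₀), such that T is not contained in the L-span of H. Then π₀ = π₁ as point sets. -/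
open Submodule Module

/-!
Choose an `L`-basis `(t, h₁, …, h_m)` that is a `K`-basis of `V₀`, where `t` spans the centre and
the `hᵢ` span `H`. A point lies in the extension of a hyperplane of `V₀` exactly when its
coordinates are linearly dependent over `K`. So for a point `u` of the line other than the centre,
with coordinates `(u₀, u₁, …, u_m)`, the non-containment hypothesis makes `u₁, …, u_m`
independent over `K`, and the points `u + β t` of the splash form a translate of the `K`-span `W`
of `u₁, …, u_m`.

As `B(H) ⊆ B(V₁)`, the subspace `V₁` has a `K`-basis `(ν t, a h₁, …, a h_m)`: comparing the points
of `hᵢ`, `hⱼ` and `hᵢ + hⱼ` shows that the same `a` serves all the `hᵢ`. Equality of the splashes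
now says that `a / ν` stabilises `W`, so `[K(a / ν) : K]` divides both `dim W = m` and `[L : K]`.
Therefore `a / ν ∈ K`, that is, `V₁ = a V₀`.
-/

namespace Subgeometry

section Scalars

open IntermediateField

variable {K L M : Type*} [Field K] [Field L] [Algebra K L]
  [AddCommGroup M] [Module L M] [Module K M] [IsScalarTower K L M]

theorem finrank_adjoin_dvd_finrank_of_smul_mem {μ : L} (hμ : IsAlgebraic K μ)
    {W : Submodule K M} (hW : ∀ x ∈ W, μ • x ∈ W) : finrank K K⟮μ⟯ ∣ finrank K W := by
  have hstab : ∀ c ∈ K⟮μ⟯, ∀ x ∈ W, c • x ∈ W := by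
    intro c hc
    rw [← IntermediateField.mem_toSubalgebra, adjoin_simple_toSubalgebra_of_isAlgebraic hμ] at hc
    induction hc using Algebra.adjoin_induction with
    | mem c hc => rwa [Set.mem_singleton_iff.1 hc]
    | algebraMap k => exact fun x hx => by simpa using W.smul_mem k hx
    | add c d _ _ hc hd =>
      exact fun x hx => add_smul c d x ▸ W.add_mem (hc x hx) (hd x hx)
    | mul c d _ _ hc hd => exact fun x hx => mul_smul c d x ▸ hc _ (hd x hx)
  have : IsScalarTower K K⟮μ⟯ M := ⟨fun k c x => smul_assoc k (c : L) x⟩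
  let W' : Submodule K⟮μ⟯ M :=
    { W.toAddSubmonoid with smul_mem' := fun c x hx => hstab c c.2 x hx }
  exact ⟨finrank K⟮μ⟯ W', (finrank_mul_finrank K K⟮μ⟯ W').symm⟩

theorem mem_bot_of_smul_mem_of_coprime [FiniteDimensional K L] {μ : L} {W : Submodule K M}
    (hcoprime : (finrank K L).Coprime (finrank K W)) (hW : ∀ x ∈ W, μ • x ∈ W) :
    μ ∈ (⊥ : IntermediateField K L) := by
  have hdvdL : finrank K K⟮μ⟯ ∣ finrank K L := ⟨_, (finrank_mul_finrank K K⟮μ⟯ L).symm⟩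
  have hdvdW := finrank_adjoin_dvd_finrank_of_smul_mem (Algebra.IsAlgebraic.isAlgebraic μ) hW
  exact finrank_adjoin_simple_eq_one_iff.1 (Nat.eq_one_of_dvd_coprimes hcoprime hdvdL hdvdW)

end Scalars

section Points

variable {L E : Type*} [Field L] [AddCommGroup E] [Module L E]

theorem span_singleton_mem_BSet_iff {X : Set E} {x : E} (hx : x ≠ 0) :
    span L {x} ∈ BSet L X ↔ ∃ a : Lˣ, a • x ∈ X := by
  constructor
  · rintro ⟨y, hy, -, hxy⟩
    obtain ⟨a, rfl⟩ := span_singleton_eq_span_singleton.1 hxy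
    exact ⟨a, hy⟩
  · rintro ⟨a, ha⟩
    exact ⟨a • x, ha, (smul_ne_zero_iff_ne a).2 hx, span_singleton_eq_span_singleton.2 ⟨a, rfl⟩⟩

theorem BSet_eq_of_smul_mem_iff {X Y : Set E} (a : Lˣ) (h : ∀ x, a • x ∈ Y ↔ x ∈ X) :
    BSet L X = BSet L Y := by
  have hspan (x : E) : span L {x} = span L {a • x} :=
    span_singleton_eq_span_singleton.2 ⟨a, rfl⟩
  ext P
  constructor
  · rintro ⟨x, hx, hx0, rfl⟩
    exact ⟨a • x, (h x).2 hx, (smul_ne_zero_iff_ne a).2 hx0, hspan x⟩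
  · rintro ⟨y, hy, hy0, rfl⟩
    refine ⟨a⁻¹ • y, (h _).1 (by rwa [smul_inv_smul]), (smul_ne_zero_iff_ne a⁻¹).2 hy0, ?_⟩
    rw [hspan (a⁻¹ • y), smul_inv_smul]

theorem span_pair_eq_of_finrank_eq_two {U : Submodule L E} (hU : finrank L U = 2) {t u : E}
    (ht0 : t ≠ 0) (ht : t ∈ U) (hu : u ∈ U) (hut : u ∉ span L {t}) : span L {t, u} = U := by
  have : FiniteDimensional L U := Module.finite_of_finrank_pos (by omega)
  have hli : LinearIndependent L ![t, u] :=
    (LinearIndependent.pair_iff' ht0).2 fun c hc => hut (mem_span_singleton.2 ⟨c, hc⟩)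
  apply eq_of_le_of_finrank_eq
  · exact span_le.2 (Set.pair_subset ht hu)
  · rw [← Matrix.range_cons_cons_empty t u ![], finrank_span_eq_card hli, hU, Fintype.card_fin]

end Points

section Frames

variable {K L E κ : Type*} [Field K] [Field L] [Algebra K L]
  [AddCommGroup E] [Module L E] [Module K E] [IsScalarTower K L E]

theorem smul_mem_span_range_unitsSMul_iff (e : Basis κ L E) (w : κ → Lˣ) (c : L) (x : E) :
    c • x ∈ span K (Set.range (e.unitsSMul w)) ↔
      ∀ i, c / w i * e.repr x i ∈ (⊥ : IntermediateField K L) := by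
  simp only [Basis.mem_span_iff_repr_mem, Basis.repr_unitsSMul, map_smul, Finsupp.smul_apply,
    Units.smul_def, Units.val_inv_eq_inv_val, smul_eq_mul, IntermediateField.mem_bot,
    div_eq_mul_inv, mul_assoc]

variable [Fintype κ]

theorem span_range_basis_eq_of_forall_mem [Nonempty κ] (e : Basis κ L E) {V : Submodule K E}
    (hV : finrank K V = Fintype.card κ) (he : ∀ i, e i ∈ V) : span K (Set.range e) = V := by
  have : FiniteDimensional K V := Module.finite_of_finrank_pos (hV ▸ Fintype.card_pos)
  apply eq_of_le_of_finrank_eq (span_le.2 (Set.range_subset_iff.2 he))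
  rw [finrank_span_eq_card (e.linearIndependent.restrict_scalars' K), hV]

theorem BSet_span_range_eq_of_smul_mem [Nonempty κ] (e : Basis κ L E) {V : Submodule K E}
    (hV : finrank K V = Fintype.card κ) (a : Lˣ) (ha : ∀ i, a • e i ∈ V) :
    BSet L (span K (Set.range e) : Set E) = BSet L (V : Set E) := by
  have hspan : span K (Set.range (e.unitsSMul fun _ => a)) = V :=
    span_range_basis_eq_of_forall_mem _ hV fun i => by simpa only [Basis.unitsSMul_apply] using ha i
  refine BSet_eq_of_smul_mem_iff a fun x => ?_
  rw [← hspan, SetLike.mem_coe, SetLike.mem_coe, Units.smul_def,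
    smul_mem_span_range_unitsSMul_iff, Basis.mem_span_iff_repr_mem]
  simp [IntermediateField.mem_bot]

/-- The point of `e i + e j` forces any two multiples of `e i` and `e j` in `V` to have the same
scalar, up to `K`. -/
theorem smul_mem_of_span_add_mem_BSet (e : Basis κ L E) {V : Submodule K E}
    (hV : finrank K V = Fintype.card κ) (hpoints : ∀ k, span L {e k} ∈ BSet L (V : Set E))
    {i j : κ} (hij : i ≠ j) (hsum : span L {e i + e j} ∈ BSet L (V : Set E)) {a : Lˣ}
    (ha : a • e i ∈ V) : a • e j ∈ V := by
  classical
  have : Nonempty κ := ⟨i⟩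
  have hmul (k : κ) : ∃ w : Lˣ, w • e k ∈ V :=
    (span_singleton_mem_BSet_iff (e.ne_zero k)).1 (hpoints k)
  choose w hw using hmul
  have hspan : span K (Set.range (e.unitsSMul w)) = V :=
    span_range_basis_eq_of_forall_mem _ hV fun k => by simpa only [Basis.unitsSMul_apply] using hw k
  have hne : e i + e j ≠ 0 := fun h0 => by
    simpa [hij] using congrArg (fun x => e.repr x i) h0
  obtain ⟨c, hc⟩ := (span_singleton_mem_BSet_iff hne).1 hsum
  rw [← hspan, SetLike.mem_coe, Units.smul_def, smul_mem_span_range_unitsSMul_iff] at hc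
  rw [← hspan, Units.smul_def, smul_mem_span_range_unitsSMul_iff] at ha ⊢
  have hci : (c / w i : L) ∈ (⊥ : IntermediateField K L) := by simpa [hij] using hc i
  have hcj : (c / w j : L) ∈ (⊥ : IntermediateField K L) := by simpa [hij] using hc j
  have hai : (a / w i : L) ∈ (⊥ : IntermediateField K L) := by simpa using ha i
  have haj : (a / w j : L) ∈ (⊥ : IntermediateField K L) := by
    have hquot : (a / w j : L) = a / w i / (c / w i) * (c / w j) := by field_simp
    exact hquot ▸ mul_mem (div_mem hai hci) hcj
  intro k
  obtain rfl | hk := eq_or_ne j k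
  · simpa using haj
  · simp [hk]

end Frames

section Hyperplanes

variable {K L E κ : Type*} [Field K] [Field L] [Algebra K L]
  [AddCommGroup E] [Module L E]

/-- The `L`-linear form on `E` extending the `K`-linear form on the `K`-span of the basis `e` that
takes the values `c` on `e`. The kernels of these forms, for `c ≠ 0`, are the extensions of the
hyperplanes of the subgeometry with frame `e`. -/
noncomputable def extendedForm (e : Basis κ L E) (c : κ → K) : E →ₗ[L] L :=
  e.constr L fun i => algebraMap K L (c i)

theorem extendedForm_apply [Fintype κ] (e : Basis κ L E) (c : κ → K) (x : E) :
    extendedForm e c x = ∑ i, c i • e.repr x i := by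
  simp [extendedForm, Basis.constr_apply_fintype, Algebra.smul_def, mul_comm]

variable [Module K E] [IsScalarTower K L E]

theorem extendedForm_restrictScalars (e : Basis κ L E) (φ : Dual K (span K (Set.range e)))
    (x : span K (Set.range e)) :
    extendedForm e (fun i => φ (e.restrictScalars K i)) (x : E) = algebraMap K L (φ x) := by
  let V := span K (Set.range e)
  have hforms : (extendedForm e fun i => φ (e.restrictScalars K i)).restrictScalars K ∘ₗ V.subtype =
      Algebra.linearMap K L ∘ₗ φ :=
    (e.restrictScalars K).ext fun i => by simp [V, extendedForm, Basis.constr_basis]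
  exact LinearMap.congr_fun hforms x

variable [Fintype κ]

/-- The subspace `X` lies in the extension of a hyperplane of the subgeometry `B(V)`, where `r` is
the dimension of `V` over `K`. -/
def LiesInHyperplaneExtension (V : Submodule K E) (r : ℕ) (X : Submodule L E) : Prop :=
  ∃ H : Submodule K E, H ≤ V ∧ finrank K H = r - 1 ∧ X ≤ span L (H : Set E)

theorem exists_span_le_ker_extendedForm [Nonempty κ] (e : Basis κ L E) {H : Submodule K E}
    (hHV : H ≤ span K (Set.range e)) (hH : finrank K H = Fintype.card κ - 1) :
    ∃ c : κ → K, c ≠ 0 ∧ span L (H : Set E) ≤ LinearMap.ker (extendedForm e c) := by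
  set V := span K (Set.range e)
  let b : Basis κ K V := e.restrictScalars K
  have hproper : H.submoduleOf V < ⊤ := by
    refine lt_top_iff_ne_top.2 fun htop => ?_
    have hrank : finrank K H = Fintype.card κ := by
      rw [← (submoduleOfEquivOfLe hHV).finrank_eq, htop, finrank_top, finrank_eq_card_basis b]
    have := Fintype.card_pos (α := κ)
    omega
  obtain ⟨φ, hφ0, hφ⟩ := exists_le_ker_of_lt_top _ hproper
  refine ⟨fun i => φ (b i), fun h0 => hφ0 (b.ext (congrFun h0)), span_le.2 fun x hx => ?_⟩
  have hφx : φ ⟨x, hHV hx⟩ = 0 := hφ hx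
  rw [SetLike.mem_coe, LinearMap.mem_ker, extendedForm_restrictScalars e φ ⟨x, hHV hx⟩, hφx,
    map_zero]

theorem exists_ker_extendedForm_le_span (e : Basis κ L E) {c : κ → K} (hc : c ≠ 0) :
    ∃ H : Submodule K E, H ≤ span K (Set.range e) ∧ finrank K H = Fintype.card κ - 1 ∧
      LinearMap.ker (extendedForm e c) ≤ span L (H : Set E) := by
  set V := span K (Set.range e)
  let b : Basis κ K V := e.restrictScalars K
  let φ : Dual K V := b.constr K c
  have hφ (i : κ) : φ (b i) = c i := b.constr_basis K c i
  obtain ⟨j, hj : c j ≠ 0⟩ := Function.ne_iff.1 hc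
  have : FiniteDimensional K V := b.finiteDimensional_of_finite
  refine ⟨(LinearMap.ker φ).map V.subtype, map_subtype_le _ _, ?_, fun x hx => ?_⟩
  · have hφ0 : φ ≠ 0 := fun h0 => hj (by rw [← hφ, h0, LinearMap.zero_apply])
    have hker := Module.Dual.finrank_ker_add_one_of_ne_zero hφ0
    rw [finrank_eq_card_basis b] at hker
    rw [finrank_map_subtype_eq]
    omega
  have hmem (i : κ) : c j • e i - c i • e j ∈ (LinearMap.ker φ).map V.subtype :=
    ⟨c j • b i - c i • b j, by simp [hφ, mul_comm], by simp [b, V]⟩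
  rw [LinearMap.mem_ker, extendedForm_apply] at hx
  have hcx : c j • x = ∑ i, e.repr x i • (c j • e i - c i • e j) := by
    simp_rw [smul_sub, Finset.sum_sub_distrib, smul_comm (e.repr x _) (c _), ← smul_assoc,
      ← Finset.sum_smul, hx, zero_smul, sub_zero, smul_assoc, ← Finset.smul_sum, e.sum_repr]
  rw [← (span L _).smul_mem_iff ((map_ne_zero (algebraMap K L)).2 hj), algebraMap_smul, hcx]
  exact sum_mem fun i _ => smul_mem _ _ (subset_span (hmem i))

theorem liesInHyperplaneExtension_iff [Nonempty κ] (e : Basis κ L E) (X : Submodule L E) :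
    LiesInHyperplaneExtension (span K (Set.range e)) (Fintype.card κ) X ↔
      ∃ c : κ → K, c ≠ 0 ∧ X ≤ LinearMap.ker (extendedForm e c) := by
  constructor
  · rintro ⟨H, hHV, hH, hX⟩
    obtain ⟨c, hc, hker⟩ := exists_span_le_ker_extendedForm e hHV hH
    exact ⟨c, hc, hX.trans hker⟩
  · rintro ⟨c, hc, hX⟩
    obtain ⟨H, hHV, hH, hker⟩ := exists_ker_extendedForm_le_span e hc
    exact ⟨H, hHV, hH, hX.trans hker⟩

theorem span_singleton_mem_Splash_iff [Nonempty κ] (e : Basis κ L E) {U : Submodule L E} {x : E}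
    (hx0 : x ≠ 0) (hxU : x ∈ U) :
    span L {x} ∈ Splash K L (span K (Set.range e)) U (Fintype.card κ) ↔
      ¬ LinearIndependent K (e.repr x) := by
  have hSplash : span L {x} ∈ Splash K L (span K (Set.range e)) U (Fintype.card κ) ↔
      LiesInHyperplaneExtension (span K (Set.range e)) (Fintype.card κ) (span L {x}) :=
    ⟨fun h => h.2.2, fun h =>
      ⟨finrank_span_singleton hx0, (span_singleton_le_iff_mem x U).2 hxU, h⟩⟩
  simp_rw [hSplash, liesInHyperplaneExtension_iff, Fintype.not_linearIndependent_iff,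
    span_singleton_le_iff_mem, LinearMap.mem_ker, extendedForm_apply, Function.ne_iff,
    Pi.zero_apply, and_comm]

end Hyperplanes

section Tangent

variable {K L E ι : Type*} [Field K] [Field L] [Algebra K L]
  [AddCommGroup E] [Module L E] [Module K E] [IsScalarTower K L E] [Fintype ι]

theorem linearIndependent_repr_some (e : Basis (Option ι) L E) {U : Submodule L E}
    (hU : finrank L U = 2) (ht : e none ∈ U)
    (hext : ¬ LiesInHyperplaneExtension (span K (Set.range e)) (Fintype.card (Option ι)) U)
    {u : E} (hu : u ∈ U) (hut : u ∉ span L {e none}) :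
    LinearIndependent K fun i => e.repr u (some i) := by
  refine Fintype.linearIndependent_iff.2 fun c hc => ?_
  by_contra! hc0
  obtain ⟨i, hi⟩ := hc0
  refine hext ((liesInHyperplaneExtension_iff e U).2
    ⟨fun o => o.elim 0 c, fun h0 => hi (congrFun h0 (some i)), ?_⟩)
  rw [← span_pair_eq_of_finrank_eq_two hU (e.ne_zero none) ht hu hut, span_le]
  exact Set.pair_subset (by simp [extendedForm_apply, Fintype.sum_option])
    (by simp [extendedForm_apply, Fintype.sum_option, hc])

theorem linearIndependent_mul_left_iff {κ : Type*} {a : L} (ha : a ≠ 0) {v : κ → L} :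
    LinearIndependent K (fun i => a * v i) ↔ LinearIndependent K v :=
  LinearMap.linearIndependent_iff (LinearMap.mulLeft K a)
    (LinearMap.ker_eq_bot.2 (mul_right_injective₀ ha))

theorem div_mul_mem_span_repr_of_Splash_subset [Nonempty ι] (e : Basis (Option ι) L E) {a ν : Lˣ}
    {U : Submodule L E} (ht : e none ∈ U)
    (hsplash : Splash K L (span K (Set.range e)) U (Fintype.card (Option ι)) ⊆
      Splash K L (span K (Set.range (e.unitsSMul fun o => o.elim ν fun _ => a))) U
        (Fintype.card (Option ι)))
    {u : E} (hu : u ∈ U) (hli : LinearIndependent K fun i => e.repr u (some i)) {β : L}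
    (hβ : β ∈ span K (Set.range fun i => e.repr u (some i))) :
    (a / ν : L) * β ∈ span K (Set.range fun i => e.repr u (some i)) := by
  let x := u + (β - e.repr u none) • e none
  have hxnone : e.repr x none = β := by simp [x]
  have hxsome (i : ι) : e.repr x (some i) = e.repr u (some i) := by simp [x]
  have hx0 : x ≠ 0 := fun h0 =>
    hli.ne_zero (Classical.arbitrary ι) (by rw [← hxsome, h0, map_zero, Finsupp.zero_apply])
  have hxU : x ∈ U := add_mem hu (smul_mem _ _ ht)
  have hx₀ : span L {x} ∈ Splash K L (span K (Set.range e)) U (Fintype.card (Option ι)) := by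
    rw [span_singleton_mem_Splash_iff e hx0 hxU, linearIndependent_option, not_and_not_right]
    simpa only [Function.comp_def, hxnone, hxsome] using fun _ => hβ
  have hx₁ := (span_singleton_mem_Splash_iff _ hx0 hxU).1 (hsplash hx₀)
  rw [← linearIndependent_mul_left_iff a.ne_zero, linearIndependent_option,
    not_and_not_right] at hx₁
  simpa [Function.comp_def, hxnone, hxsome, hli, Units.smul_def, div_eq_mul_inv, mul_assoc]
    using hx₁

theorem div_mem_bot_of_Splash_subset [FiniteDimensional K L] [Nonempty ι]
    (hcoprime : (finrank K L).Coprime (Fintype.card ι)) (e : Basis (Option ι) L E) {a ν : Lˣ}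
    {U : Submodule L E} (hU : finrank L U = 2) (ht : e none ∈ U)
    (hext : ¬ LiesInHyperplaneExtension (span K (Set.range e)) (Fintype.card (Option ι)) U)
    (hsplash : Splash K L (span K (Set.range e)) U (Fintype.card (Option ι)) ⊆
      Splash K L (span K (Set.range (e.unitsSMul fun o => o.elim ν fun _ => a))) U
        (Fintype.card (Option ι))) :
    (a / ν : L) ∈ (⊥ : IntermediateField K L) := by
  obtain ⟨u, hu, hut⟩ : ∃ u ∈ U, u ∉ span L {e none} := by
    refine SetLike.not_le_iff_exists.1 fun hle => ?_
    have hrank := finrank_mono hle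
    rw [hU, finrank_span_singleton (e.ne_zero none)] at hrank
    omega
  have hli := linearIndependent_repr_some e hU ht hext hu hut
  refine mem_bot_of_smul_mem_of_coprime
    (W := span K (Set.range fun i => e.repr u (some i))) ?_ fun β hβ => ?_
  · rwa [finrank_span_eq_card hli]
  · exact div_mul_mem_span_repr_of_Splash_subset e ht hsplash hu hli hβ

theorem exists_basis_of_hyperplane {m : ℕ} (hE : finrank L E = m + 1) {V H : Submodule K E}
    (hVrank : finrank K V = m + 1) (hVspan : span L (V : Set E) = ⊤) (hHV : H ≤ V)
    (hHrank : finrank K H = m) {t : E} (htV : t ∈ V) (htH : t ∉ H) :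
    ∃ e : Basis (Option (Fin m)) L E,
      e none = t ∧ (∀ i, e (some i) ∈ H) ∧ span K (Set.range e) = V := by
  have : FiniteDimensional K V := Module.finite_of_finrank_pos (by omega)
  have : FiniteDimensional K H := finiteDimensional_of_le hHV
  let h : Basis (Fin m) K H := finBasisOfFinrankEq K H hHrank
  let f : Option (Fin m) → E := fun o => o.elim t fun i => h i
  have hspanH : span K (Set.range (f ∘ some)) = H := by
    have := congrArg (map H.subtype) h.span_eq
    rwa [map_span, ← Set.range_comp, Submodule.map_top, range_subtype] at this
  have hf : LinearIndependent K f :=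
    linearIndependent_option.2
      ⟨h.linearIndependent.map' H.subtype H.ker_subtype, by rwa [hspanH]⟩
  have hspanV : span K (Set.range f) = V := by
    apply eq_of_le_of_finrank_eq
    · refine span_le.2 (Set.range_subset_iff.2 ?_)
      rintro (_ | i)
      exacts [htV, hHV (h i).2]
    · rw [finrank_span_eq_card hf, hVrank, Fintype.card_option, Fintype.card_fin]
  have hspanE : ⊤ ≤ span L (Set.range f) := by
    rw [← hVspan, ← hspanV, span_span_of_tower]
  refine ⟨basisOfTopLeSpanOfCardEqFinrank f hspanE (by simp [hE]), ?_⟩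
  rw [coe_basisOfTopLeSpanOfCardEqFinrank]
  exact ⟨rfl, fun i => (h i).2, hspanV⟩

theorem exists_smul_mem_of_BSet_subset [Nonempty ι] (e : Basis (Option ι) L E)
    {V H : Submodule K E} (hV : finrank K V = Fintype.card (Option ι))
    (ht : span L {e none} ∈ BSet L (V : Set E)) (heH : ∀ i, e (some i) ∈ H)
    (hH : BSet L (H : Set E) ⊆ BSet L (V : Set E)) :
    ∃ a : Lˣ, ∀ i, a • e (some i) ∈ V := by
  have hpoints : ∀ o, span L {e o} ∈ BSet L (V : Set E)
    | none => ht
    | some i => hH ⟨_, heH i, e.ne_zero _, rfl⟩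
  let j : ι := Classical.arbitrary ι
  obtain ⟨a, ha⟩ := (span_singleton_mem_BSet_iff (e.ne_zero (some j))).1 (hpoints (some j))
  refine ⟨a, fun i => ?_⟩
  obtain rfl | hij := eq_or_ne j i
  · exact ha
  have hji : some j ≠ some i := (Option.some_injective ι).ne hij
  refine smul_mem_of_span_add_mem_BSet e hV hpoints hji (hH ?_) ha
  refine ⟨_, H.add_mem (heH j) (heH i), fun h0 => ?_, rfl⟩
  simpa [hij.symm] using congrArg (fun x => e.repr x (some j)) h0

end Tangent

end Subgeometry

open Subgeometry in
theorem subgeometry_unique_of_common_hyperplane_general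
    {K L E : Type*} [Field K] [Field L] [Algebra K L] [FiniteDimensional K L]
    [AddCommGroup E] [Module L E] [Module K E] [IsScalarTower K L E] [FiniteDimensional L E]
    {r : ℕ} (hE : finrank L E = r) (hcoprime : (finrank K L).Coprime (r - 1))
    {V₀ V₁ : Submodule K E} (hV₀rank : finrank K V₀ = r) (hV₀span : span L (V₀ : Set E) = ⊤)
    (hV₁rank : finrank K V₁ = r) {U T : Submodule L E} (hU : finrank L U = 2)
    (hT₀ : T ∈ BSet L (V₀ : Set E)) (hT₁ : T ∈ BSet L (V₁ : Set E)) (hTU : T ≤ U)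
    (hext : ¬ LiesInHyperplaneExtension V₀ r U)
    (hsplash : Splash K L V₀ U r ⊆ Splash K L V₁ U r)
    {H : Submodule K E} (hHV₀ : H ≤ V₀) (hHrank : finrank K H = r - 1)
    (hHV₁ : BSet L (H : Set E) ⊆ BSet L (V₁ : Set E)) (hTH : ¬ T ≤ span L (H : Set E)) :
    BSet L (V₀ : Set E) = BSet L (V₁ : Set E) := by
  have hr : 2 ≤ r := hU ▸ hE ▸ finrank_le U
  obtain ⟨m, rfl⟩ : ∃ m, r = m + 1 := ⟨r - 1, by omega⟩
  have : Nonempty (Fin m) := ⟨⟨0, by omega⟩⟩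
  have hcard : Fintype.card (Option (Fin m)) = m + 1 := by simp
  obtain ⟨t, htV₀, ht0, rfl⟩ := hT₀
  rw [span_singleton_le_iff_mem] at hTU hTH
  obtain ⟨e, rfl, heH, rfl⟩ := exists_basis_of_hyperplane hE hV₀rank hV₀span hHV₀ hHrank htV₀
    fun htH => hTH (subset_span htH)
  rw [← hcard] at hV₁rank hext hsplash
  obtain ⟨ν, hν⟩ := (span_singleton_mem_BSet_iff ht0).1 hT₁
  obtain ⟨a, ha⟩ := exists_smul_mem_of_BSet_subset e hV₁rank hT₁ heH hHV₁
  have hV₁ : span K (Set.range (e.unitsSMul fun o => o.elim ν fun _ => a)) = V₁ :=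
    span_range_basis_eq_of_forall_mem _ hV₁rank <| by
      rintro (_ | i) <;> rw [Basis.unitsSMul_apply]
      exacts [hν, ha i]
  rw [← hV₁] at hsplash
  obtain ⟨k, hk⟩ := IntermediateField.mem_bot.1
    (div_mem_bot_of_Splash_subset (by simpa using hcoprime) e hU hTU hext hsplash)
  have hat : a • e none = k • ν • e none := by
    rw [← algebraMap_smul L k, hk, Units.smul_def, Units.smul_def, smul_smul,
      div_mul_cancel₀ _ ν.ne_zero]
  exact BSet_span_range_eq_of_smul_mem e hV₁rank a
    (Option.rec (hat ▸ V₁.smul_mem k hν) ha)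

/-- uniqueness of a `q`-subgeometry with given tangent splash and a
common hyperplane avoiding the centre, when `gcd(n, r-1) = 1`. -/
theorem subgeometry_unique_of_common_hyperplane
    (K L : Type*) [Field K] [Field L] [Algebra K L] [Fintype K] [Fintype L]
    (r n : ℕ) (hr : 3 ≤ r) (hrn : r ≤ n) (hrank : Module.finrank K L = n)
    (hgcd : Nat.gcd n (r - 1) = 1)
    (V₀ V₁ : Submodule K (Fin r → L))
    (hV₀rank : Module.finrank K V₀ = r)
    (hV₀span : Submodule.span L (V₀ : Set (Fin r → L)) = ⊤)
    (hV₁rank : Module.finrank K V₁ = r)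
    (hV₁span : Submodule.span L (V₁ : Set (Fin r → L)) = ⊤)
    (U : Submodule L (Fin r → L)) (hU : Module.finrank L U = 2)
    (T : Submodule L (Fin r → L))
    (htangent₀ : {P | P ∈ BSet L (V₀ : Set (Fin r → L)) ∧ P ≤ U} = {T})
    (htangent₁ : {P | P ∈ BSet L (V₁ : Set (Fin r → L)) ∧ P ≤ U} = {T})
    (hext₀ : ∀ H : Submodule K (Fin r → L), H ≤ V₀ → Module.finrank K H = r - 1 →
      ¬ U ≤ Submodule.span L (H : Set (Fin r → L)))
    (hext₁ : ∀ H : Submodule K (Fin r → L), H ≤ V₁ → Module.finrank K H = r - 1 →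
      ¬ U ≤ Submodule.span L (H : Set (Fin r → L)))
    (hsplash : Splash K L V₀ U r = Splash K L V₁ U r)
    (H H' : Submodule K (Fin r → L))
    (hHV₀ : H ≤ V₀) (hHrank : Module.finrank K H = r - 1)
    (hH'V₁ : H' ≤ V₁) (hH'rank : Module.finrank K H' = r - 1)
    (hcommon : BSet L (H : Set (Fin r → L)) = BSet L (H' : Set (Fin r → L)))
    (hTH : ¬ T ≤ Submodule.span L (H : Set (Fin r → L))) :
    BSet L (V₀ : Set (Fin r → L)) = BSet L (V₁ : Set (Fin r → L)) := by
  have : FiniteDimensional K L := Module.finite_of_finrank_pos (by omega)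
  obtain ⟨hT₀, hTU⟩ := htangent₀.symm.subset (Set.mem_singleton T)
  have hT₁ := (htangent₁.symm.subset (Set.mem_singleton T)).1
  have hHV₁ : BSet L (H : Set (Fin r → L)) ⊆ BSet L (V₁ : Set (Fin r → L)) :=
    hcommon.trans_subset fun _ ⟨x, hx, hx0, hP⟩ => ⟨x, hH'V₁ hx, hx0, hP⟩
  exact subgeometry_unique_of_common_hyperplane_general (Module.finrank_fin_fun L)
    (by rwa [hrank]) hV₀rank hV₀span hV₁rank hU hT₀ hT₁ hTU
    (fun ⟨H, hH, hHr, hUH⟩ => hext₀ H hH hHr hUH) hsplash.subset hHV₀ hHrank hHV₁ hTH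
end

section
/- Let 3 ≤ r ≤ n and suppose gcd(n, r-1) > 1. Then there exist two q-subgeometries π₀ = B(V₀) and π₁ = B(V₁) of PG(r-1,q^n) that are distinct as point sets, a 2-dimensional L-subspace U of L^r such that the line l_∞ = PG(U) is tangent to both π₀ and π₁ at a common point T and is not contained in the extension of any hyperplane of π₀ or of π₁, and K-subspaces H ⊆ V₀ and H' ⊆ V₁ of K-dimension r-1 with B(H) = B(H') (a common hyperplane H₀ of π₀ and π₁) with T not contained in the L-span of H, such that S(π₀,l_∞) = S(π₁,l_∞). -/
open Submodule Module

/-!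
Fix a basis `b 0, …, b m` of `L ^ r`, `r = m + 1`, and let `V` be its `K`-span. The hyperplanes of
`B(V)` extend to the kernels of the linear forms with coefficients `c 0, …, c m` in `K`. Take
`K`-independent `a 1, …, a m` in `L`, with `K`-span `A`, and let `U` be the line of the vectors
`t • b 0 + s • ∑ i, a i • b i`. Such a vector lies in the kernel of the form `c` if and only if
`t * c 0 + s * α = 0` with `α = ∑ i, c i • a i`, so the splash of `B(V)` on `U` consists of the
solutions of the equations `t * k + s * α = 0` for nonzero `(k, α)` in `K × A`.

Replacing `b 0` by `ν • b 0` keeps `U`, its centre and the hyperplane spanned by the other basis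
vectors, and replaces `α` by `ν * α` in the description of the splash. If `ν * A = A`, the splash
does not change, whereas the subgeometry does as soon as `ν` is not in `K`. A subspace `A` of `L`
over an intermediate field `F ≠ K` admits such a `ν` in `F`, and its dimension over `K` can be any
multiple of `[F : K]` up to `[L : K]`; for finite fields take `[F : K] = gcd (n, r - 1)`.
-/

section Subfield

variable {K L : Type*} [Field K] [Field L] [Algebra K L]

theorem exists_intermediateField_finrank_eq [Finite L] {d : ℕ} (hd : d ∣ finrank K L) :
    ∃ F : IntermediateField K L, finrank K F = d := by
  have : Finite K := Finite.of_injective _ (algebraMap K L).injective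
  have : NeZero d := ⟨ne_zero_of_dvd_ne_zero finrank_pos.ne' hd⟩
  obtain ⟨p, _⟩ := CharP.exists K
  have : Fact p.Prime := ⟨CharP.char_is_prime K p⟩
  have hfinrank : finrank K (FiniteField.Extension K p d) = d :=
    FiniteField.finrank_extension K p d
  obtain ⟨f⟩ := FiniteField.nonempty_algHom_of_finrank_dvd
    (F := K) (K := FiniteField.Extension K p d) (L := L) (hfinrank.symm ▸ hd)
  exact ⟨f.fieldRange, (LinearEquiv.ofInjective f.toLinearMap f.injective).finrank_eq.symm.trans
    hfinrank⟩

theorem exists_submodule_finrank_eq [FiniteDimensional K L] (F : IntermediateField K L) {m : ℕ}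
    (hdvd : finrank K F ∣ m) (hm : m ≤ finrank K L) :
    ∃ A : Submodule F L, finrank K A = m := by
  obtain ⟨k, rfl⟩ := hdvd
  rw [← finrank_mul_finrank K F L] at hm
  obtain ⟨v, hv⟩ :=
    exists_linearIndependent_of_le_finrank (Nat.le_of_mul_le_mul_left hm finrank_pos)
  refine ⟨span F (Set.range v), ?_⟩
  rw [← finrank_mul_finrank K F, finrank_span_eq_card hv, Fintype.card_fin]

theorem exists_linearIndependent_mul_mem_span_iff [FiniteDimensional K L]
    (F : IntermediateField K L) {m : ℕ} (hdvd : finrank K F ∣ m) (hm : m ≤ finrank K L) :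
    ∃ a : Fin m → L, LinearIndependent K a ∧ ∀ μ ∈ F, μ ≠ 0 →
      ∀ x, μ * x ∈ span K (Set.range a) ↔ x ∈ span K (Set.range a) := by
  obtain ⟨A, hA⟩ := exists_submodule_finrank_eq F hdvd hm
  let e := finBasisOfFinrankEq K (A.restrictScalars K) hA
  let incl := (A.restrictScalars K).subtype
  have hspan : span K (Set.range (incl ∘ e)) = A.restrictScalars K := by
    rw [Set.range_comp, ← map_span, e.span_eq, map_subtype_top]
  refine ⟨incl ∘ e, e.linearIndependent.map' incl (ker_subtype _), fun μ hμ hμ0 x => ?_⟩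
  rw [hspan]
  exact A.smul_mem_iff (s := (⟨μ, hμ⟩ : F)) (by simpa [Subtype.ext_iff] using hμ0)

theorem eq_zero_of_forall_mul_mem_range_algebraMap {ι : Type*} [Nontrivial ι] {a : ι → L}
    (ha : LinearIndependent K a) {s : L} (hs : ∀ i, s * a i ∈ Set.range (algebraMap K L)) :
    s = 0 := by
  obtain ⟨i, j, hij⟩ := exists_pair_ne ι
  obtain ⟨k, hk⟩ := hs i
  obtain ⟨l, hl⟩ := hs j
  have hrel : l • a i + -k • a j = 0 := by
    simp only [Algebra.smul_def, map_neg, hk, hl]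
    ring
  have hpair : LinearIndepOn K a {i, j} := ha.linearIndepOn _
  rw [((LinearIndepOn.pair_iff a hij).mp hpair _ _ hrel).1, map_zero] at hl
  exact (mul_eq_zero.mp hl.symm).resolve_right (ha.ne_zero j)

end Subfield

section Frame

variable {K L W ι : Type*} [Field K] [Field L] [Algebra K L] [AddCommGroup W] [Module L W]

/-- The `L`-linear form whose coefficients relative to the basis `b` are the elements `c i` of the
subfield `K`. The extensions of the hyperplanes of the subgeometry with frame `b` are the kernels
of the nonzero forms of this kind. -/
noncomputable def rationalForm (b : Basis ι L W) (c : ι → K) : W →ₗ[L] L :=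
  b.constr L (algebraMap K L ∘ c)

@[simp]
theorem rationalForm_zero (b : Basis ι L W) : rationalForm b (0 : ι → K) = 0 :=
  b.ext fun i => by simp [rationalForm]

@[simp]
theorem rationalForm_basis (b : Basis ι L W) (c : ι → K) (i : ι) :
    rationalForm b c (b i) = algebraMap K L (c i) :=
  b.constr_basis L _ i

variable [Module K W] [IsScalarTower K L W]

theorem span_span_range_basis (b : Basis ι L W) : span L (span K (Set.range b) : Set W) = ⊤ := by
  rw [span_span_of_tower, b.span_eq]

theorem BSet_span_range_unitsSMul_ne (b : Basis ι L W) {w : ι → Lˣ} {i j : ι}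
    (hw : (w i / w j : L) ∉ Set.range (algebraMap K L)) :
    BSet L (span K (Set.range (b.unitsSMul w)) : Set W) ≠
      BSet L (span K (Set.range b) : Set W) := by
  have hij : i ≠ j := by
    rintro rfl
    exact hw ⟨1, by simp⟩
  intro h
  have hmem : span L {b i + b j} ∈ BSet L (span K (Set.range b) : Set W) := by
    refine ⟨_, add_mem (subset_span ⟨i, rfl⟩) (subset_span ⟨j, rfl⟩), fun h0 => ?_, rfl⟩
    simpa [hij] using congrArg (b.repr · i) h0
  rw [← h] at hmem
  obtain ⟨x, hx, hx0, hspan⟩ := hmem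
  obtain ⟨s, rfl⟩ := mem_span_singleton.mp (hspan ▸ mem_span_singleton_self x)
  have hs : s ≠ 0 := left_ne_zero_of_smul hx0
  have hrepr := ((b.unitsSMul w).mem_span_iff_repr_mem K _).mp hx
  obtain ⟨k, hk⟩ : s * (w i : L)⁻¹ ∈ Set.range (algebraMap K L) := by
    simpa [Basis.repr_unitsSMul, Units.smul_def, hij, hij.symm] using hrepr i
  obtain ⟨l, hl⟩ : s * (w j : L)⁻¹ ∈ Set.range (algebraMap K L) := by
    simpa [Basis.repr_unitsSMul, Units.smul_def, hij, hij.symm] using hrepr j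
  refine hw ⟨l / k, ?_⟩
  rw [map_div₀, hk, hl, mul_div_mul_left _ _ hs, inv_div_inv]

theorem rationalForm_coe (b : Basis ι L W) (c : ι → K) (x : span K (Set.range b)) :
    rationalForm b c x = algebraMap K L ((b.restrictScalars K).constr K c x) := by
  have h : (rationalForm b c).restrictScalars K ∘ₗ (span K (Set.range b)).subtype =
      Algebra.linearMap K L ∘ₗ (b.restrictScalars K).constr K c :=
    (b.restrictScalars K).ext fun i => by simp
  exact LinearMap.congr_fun h x

theorem mem_span_of_rationalForm_eq_zero (b : Basis ι L W) {c : ι → K} (hc : c ≠ 0)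
    {H : Submodule K W} (hH : ∀ x ∈ span K (Set.range b), rationalForm b c x = 0 → x ∈ H)
    {x : W} (hx : rationalForm b c x = 0) : x ∈ span L (H : Set W) := by
  obtain ⟨j, hj⟩ := Function.ne_iff.mp hc
  -- The projection onto the kernel along `b j` maps every basis vector into `H`.
  let π : W →ₗ[L] W := LinearMap.id - (rationalForm b c).smulRight ((c j)⁻¹ • b j)
  have hπ_basis (i : ι) : π (b i) ∈ H := by
    have hπi : π (b i) = b i - (c i * (c j)⁻¹) • b j := by simp [π, mul_smul]
    rw [hπi]
    refine hH _ (sub_mem (subset_span ⟨i, rfl⟩) (smul_mem _ _ (subset_span ⟨j, rfl⟩))) ?_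
    rw [map_sub, LinearMap.map_smul_of_tower, rationalForm_basis, rationalForm_basis,
      Algebra.smul_def, ← map_mul, inv_mul_cancel_right₀ hj, sub_self]
  have hπ : ⊤ ≤ (span L (H : Set W)).comap π := by
    rw [← b.span_eq, span_le, Set.range_subset_iff]
    exact fun i => subset_span (hπ_basis i)
  have hπx : π x = x := by simp [π, hx]
  exact hπx ▸ hπ mem_top

theorem finrank_span_range_basis [Fintype ι] (b : Basis ι L W) :
    finrank K (span K (Set.range b)) = Fintype.card ι :=
  finrank_eq_card_basis (b.restrictScalars K)

theorem exists_span_le_ker_rationalForm [Fintype ι] (b : Basis ι L W) {H : Submodule K W}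
    (hHb : H ≤ span K (Set.range b)) (hH : finrank K H < Fintype.card ι) :
    ∃ c : ι → K, c ≠ 0 ∧ span L (H : Set W) ≤ LinearMap.ker (rationalForm b c) := by
  have hlt : H.submoduleOf (span K (Set.range b)) < ⊤ := by
    refine lt_top_iff_ne_top.mpr fun h => hH.ne ?_
    rw [hHb.antisymm (submoduleOf_eq_top.mp h), finrank_span_range_basis]
  obtain ⟨f, hf0, hf⟩ := exists_le_ker_of_lt_top _ hlt
  have hfc : (b.restrictScalars K).constr K (f ∘ b.restrictScalars K) = f :=
    (b.restrictScalars K).constr_eq K fun _ => rfl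
  refine ⟨f ∘ b.restrictScalars K, fun h => hf0 (by rw [← hfc, h, map_zero]),
    span_le.mpr fun x hx => ?_⟩
  have hfx : f ⟨x, hHb hx⟩ = 0 := hf hx
  simpa [hfc, hfx] using rationalForm_coe b (f ∘ b.restrictScalars K) ⟨x, hHb hx⟩

theorem exists_ker_rationalForm_le_span [Fintype ι] (b : Basis ι L W) {c : ι → K} (hc : c ≠ 0) :
    ∃ H ≤ span K (Set.range b), finrank K H = Fintype.card ι - 1 ∧
      LinearMap.ker (rationalForm b c) ≤ span L (H : Set W) := by
  let V := span K (Set.range b)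
  let f : Dual K V := (b.restrictScalars K).constr K c
  have hf : f ≠ 0 := ((b.restrictScalars K).constr K).map_ne_zero_iff.mpr hc
  have : FiniteDimensional K V := Module.Finite.of_basis (b.restrictScalars K)
  refine ⟨(LinearMap.ker f).map V.subtype, map_subtype_le _ _, ?_,
    fun x => mem_span_of_rationalForm_eq_zero b hc fun y hy hy0 => ?_⟩
  · rw [finrank_map_subtype_eq, ← finrank_span_range_basis (K := K) b,
      ← f.finrank_ker_add_one_of_ne_zero hf, Nat.add_sub_cancel]
  · rw [rationalForm_coe b c ⟨y, hy⟩, map_eq_zero] at hy0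
    exact ⟨⟨y, hy⟩, hy0, rfl⟩

theorem mem_splash_span_range_iff [Fintype ι] [Nonempty ι] (b : Basis ι L W) {r : ℕ}
    (hr : Fintype.card ι = r) {U P : Submodule L W} :
    P ∈ Splash K L (span K (Set.range b)) U r ↔ finrank L P = 1 ∧ P ≤ U ∧
      ∃ c : ι → K, c ≠ 0 ∧ P ≤ LinearMap.ker (rationalForm b c) := by
  subst hr
  refine and_congr_right fun _ => and_congr_right fun _ => ⟨?_, ?_⟩
  · rintro ⟨H, hHb, hH, hPH⟩
    obtain ⟨c, hc, hHc⟩ :=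
      exists_span_le_ker_rationalForm b hHb (hH ▸ Nat.pred_lt Fintype.card_ne_zero)
    exact ⟨c, hc, hPH.trans hHc⟩
  · rintro ⟨c, hc, hPc⟩
    obtain ⟨H, hHb, hH, hHc⟩ := exists_ker_rationalForm_le_span b hc
    exact ⟨H, hHb, hH, hPc.trans hHc⟩

end Frame

section TangentLine

variable {K L W : Type*} [Field K] [Field L] [Algebra K L] [AddCommGroup W] [Module L W] {m : ℕ}

/-- The line joining the first basis vector `b 0` to the point of the span of the other basis
vectors with coordinates `a`. For `K`-linearly independent `a`, with `2 ≤ m`, it is a line tangent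
at `b 0` to the subgeometry with frame `b`. -/
def tangentLine (b : Basis (Fin (m + 1)) L W) (a : Fin m → L) : Submodule L W :=
  span L {b 0, ∑ i, a i • b i.succ}

theorem mem_tangentLine {b : Basis (Fin (m + 1)) L W} {a : Fin m → L} {x : W} :
    x ∈ tangentLine b a ↔ ∃ t s : L, t • b 0 + s • ∑ i, a i • b i.succ = x :=
  mem_span_pair

theorem basis_zero_mem_tangentLine (b : Basis (Fin (m + 1)) L W) (a : Fin m → L) :
    b 0 ∈ tangentLine b a :=
  subset_span (Set.mem_insert _ _)

theorem repr_add_sum_smul_succ (b : Basis (Fin (m + 1)) L W) (a : Fin m → L) (t s : L)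
    (i : Fin m) : b.repr (t • b 0 + s • ∑ i, a i • b i.succ) i.succ = s * a i := by
  simp [Finsupp.single_apply]

theorem finrank_tangentLine (b : Basis (Fin (m + 1)) L W) {a : Fin m → L} (ha : a ≠ 0) :
    finrank L (tangentLine b a) = 2 := by
  obtain ⟨i, hi⟩ := Function.ne_iff.mp ha
  have h : LinearIndependent L ![b 0, ∑ i, a i • b i.succ] := by
    refine LinearIndependent.pair_iff.mpr fun t s hts => ?_
    have hs : s = 0 := by
      have hsa : s * a i = 0 := by rw [← repr_add_sum_smul_succ b a t s i, hts]; simp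
      exact (mul_eq_zero.mp hsa).resolve_right hi
    rw [hs, zero_smul, add_zero] at hts
    exact ⟨(smul_eq_zero.mp hts).resolve_right (b.ne_zero 0), hs⟩
  rw [tangentLine, ← Matrix.range_cons_cons_empty _ _ ![], finrank_span_eq_card h,
    Fintype.card_fin]

theorem rationalForm_add_sum_smul (b : Basis (Fin (m + 1)) L W) (c : Fin (m + 1) → K)
    (a : Fin m → L) (t s : L) :
    rationalForm b c (t • b 0 + s • ∑ i, a i • b i.succ) =
      t * algebraMap K L (c 0) + s * ∑ i, c i.succ • a i := by
  simp [Algebra.smul_def, mul_comm]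

theorem not_tangentLine_le_ker_rationalForm (b : Basis (Fin (m + 1)) L W) {a : Fin m → L}
    (ha : LinearIndependent K a) {c : Fin (m + 1) → K} (hc : c ≠ 0) :
    ¬ tangentLine b a ≤ LinearMap.ker (rationalForm b c) := by
  intro h
  have hform (t s : L) : t * algebraMap K L (c 0) + s * ∑ i, c i.succ • a i = 0 := by
    rw [← rationalForm_add_sum_smul b c]
    exact h (mem_tangentLine.mpr ⟨t, s, rfl⟩)
  have hzero : c 0 = 0 := by simpa using hform 1 0
  have hsucc : ∀ i, c (Fin.succ i) = 0 :=
    Fintype.linearIndependent_iff.mp ha _ (by simpa using hform 0 1)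
  exact hc (funext (Fin.cases hzero hsucc))

variable [Module K W] [IsScalarTower K L W]

theorem not_tangentLine_le_span (b : Basis (Fin (m + 1)) L W) {a : Fin m → L}
    (ha : LinearIndependent K a) {H : Submodule K W} (hHb : H ≤ span K (Set.range b))
    (hH : finrank K H = m) : ¬ tangentLine b a ≤ span L (H : Set W) := by
  obtain ⟨c, hc, hHc⟩ := exists_span_le_ker_rationalForm b hHb (by simp [hH])
  exact fun h => not_tangentLine_le_ker_rationalForm b ha hc (h.trans hHc)

theorem points_le_tangentLine_eq_singleton (b : Basis (Fin (m + 1)) L W) {a : Fin m → L}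
    (hm : 2 ≤ m) (ha : LinearIndependent K a) :
    {P | P ∈ BSet L (span K (Set.range b) : Set W) ∧ P ≤ tangentLine b a} = {span L {b 0}} := by
  have : Nontrivial (Fin m) := Fin.nontrivial_iff_two_le.mpr hm
  refine Set.Subset.antisymm ?_ ?_
  · rintro _ ⟨⟨x, hx, hx0, rfl⟩, hxU⟩
    obtain ⟨t, s, rfl⟩ := mem_tangentLine.mp (hxU (mem_span_singleton_self x))
    obtain rfl : s = 0 := eq_zero_of_forall_mul_mem_range_algebraMap ha fun i => by
      simpa only [repr_add_sum_smul_succ] using (b.mem_span_iff_repr_mem K _).mp hx i.succ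
    rw [zero_smul, add_zero] at hx0 ⊢
    exact span_singleton_smul_eq (left_ne_zero_of_smul hx0).isUnit _
  · rintro _ rfl
    exact ⟨⟨b 0, subset_span ⟨0, rfl⟩, b.ne_zero 0, rfl⟩,
      (span_singleton_le_iff_mem _ _).mpr (basis_zero_mem_tangentLine b a)⟩

theorem finrank_span_range_tail (b : Basis (Fin (m + 1)) L W) :
    finrank K (span K (Set.range (Fin.tail b))) = m := by
  have h : LinearIndependent K (Fin.tail b) :=
    (linearIndependent_finSucc.mp b.linearIndependent).1.restrict_scalars' K
  rw [finrank_span_eq_card h, Fintype.card_fin]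

theorem not_span_basis_zero_le_span_range_tail (b : Basis (Fin (m + 1)) L W) :
    ¬ span L {b 0} ≤ span L (span K (Set.range (Fin.tail b)) : Set W) := by
  rw [span_span_of_tower, span_singleton_le_iff_mem]
  exact (linearIndependent_finSucc.mp b.linearIndependent).2

end TangentLine

section RescaleZero

variable {K L W : Type*} [Field K] [Field L] [Algebra K L] [AddCommGroup W] [Module L W] {m : ℕ}

/-- The basis obtained from `b` by multiplying its first vector by `ν`. The
hyperplane spanned by the other vectors and the tangent lines `tangentLine b a` stay the same. -/
noncomputable def rescaleZero (b : Basis (Fin (m + 1)) L W) (ν : Lˣ) : Basis (Fin (m + 1)) L W :=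
  b.unitsSMul (Fin.cons ν 1)

@[simp]
theorem rescaleZero_zero (b : Basis (Fin (m + 1)) L W) (ν : Lˣ) :
    rescaleZero b ν 0 = (ν : L) • b 0 := by
  simp [rescaleZero, Basis.unitsSMul_apply, Units.smul_def]

@[simp]
theorem rescaleZero_succ (b : Basis (Fin (m + 1)) L W) (ν : Lˣ) (i : Fin m) :
    rescaleZero b ν i.succ = b i.succ := by
  simp [rescaleZero, Basis.unitsSMul_apply]

theorem tail_rescaleZero (b : Basis (Fin (m + 1)) L W) (ν : Lˣ) :
    Fin.tail (rescaleZero b ν) = Fin.tail b :=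
  funext (rescaleZero_succ b ν)

theorem rescaleZero_rescaleZero_inv (b : Basis (Fin (m + 1)) L W) (ν : Lˣ) :
    rescaleZero (rescaleZero b ν) ν⁻¹ = b :=
  Basis.eq_of_apply_eq (Fin.cases (by simp) fun i => by simp)

theorem span_rescaleZero_zero (b : Basis (Fin (m + 1)) L W) (ν : Lˣ) :
    span L {rescaleZero b ν 0} = span L {b 0} := by
  rw [rescaleZero_zero, span_singleton_smul_eq ν.isUnit]

theorem tangentLine_rescaleZero (b : Basis (Fin (m + 1)) L W) (ν : Lˣ) (a : Fin m → L) :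
    tangentLine (rescaleZero b ν) a = tangentLine b a := by
  simp_rw [tangentLine, span_insert, span_rescaleZero_zero, rescaleZero_succ]

variable [Module K W] [IsScalarTower K L W]

theorem splash_subset_splash_rescaleZero (b : Basis (Fin (m + 1)) L W) {a : Fin m → L}
    (ha : LinearIndependent K a) {ν : Lˣ}
    (hν : ∀ x ∈ span K (Set.range a), (ν⁻¹ : L) * x ∈ span K (Set.range a)) :
    Splash K L (span K (Set.range b)) (tangentLine b a) (m + 1) ⊆
      Splash K L (span K (Set.range (rescaleZero b ν))) (tangentLine b a) (m + 1) := by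
  intro P hP
  obtain ⟨hP1, hPU, c, hc, hPc⟩ := (mem_splash_span_range_iff b (Fintype.card_fin _)).mp hP
  obtain ⟨d, hd⟩ : ∃ d : Fin m → K, ∑ i, d i • a i = (ν⁻¹ : L) * ∑ i, c i.succ • a i :=
    (mem_span_range_iff_exists_fun K).mp (hν _ (sum_mem fun i _ =>
      smul_mem _ _ (subset_span ⟨i, rfl⟩)))
  have hform : ∀ x ∈ tangentLine b a,
      rationalForm (rescaleZero b ν) (Fin.cons (c 0) d) x = (ν⁻¹ : L) * rationalForm b c x := by
    intro x hx
    rw [← tangentLine_rescaleZero b ν] at hx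
    obtain ⟨t, s, rfl⟩ := mem_tangentLine.mp hx
    rw [rationalForm_add_sum_smul]
    simp_rw [rescaleZero_zero, rescaleZero_succ, smul_smul, rationalForm_add_sum_smul,
      Fin.cons_zero, Fin.cons_succ, hd]
    field_simp
  refine (mem_splash_span_range_iff _ (Fintype.card_fin _)).mpr
    ⟨hP1, hPU, Fin.cons (c 0) d, fun h0 => ?_, fun x hx => ?_⟩
  · refine not_tangentLine_le_ker_rationalForm b ha hc fun x hx => ?_
    simpa [h0] using hform x hx
  · rw [LinearMap.mem_ker, hform x (hPU hx), hPc hx, mul_zero]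

theorem splash_rescaleZero (b : Basis (Fin (m + 1)) L W) {a : Fin m → L}
    (ha : LinearIndependent K a) {ν : Lˣ}
    (hν : ∀ x, (ν : L) * x ∈ span K (Set.range a) ↔ x ∈ span K (Set.range a)) :
    Splash K L (span K (Set.range (rescaleZero b ν))) (tangentLine b a) (m + 1) =
      Splash K L (span K (Set.range b)) (tangentLine b a) (m + 1) := by
  apply Set.Subset.antisymm
  · have h := splash_subset_splash_rescaleZero (rescaleZero b ν) ha (ν := ν⁻¹)
      (fun x hx => by simpa using (hν x).mpr hx)
    rwa [tangentLine_rescaleZero, rescaleZero_rescaleZero_inv] at h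
  · exact splash_subset_splash_rescaleZero b ha fun x hx => (hν _).mp (by simpa using hx)

theorem BSet_span_range_rescaleZero_ne (b : Basis (Fin (m + 1)) L W) (hm : 0 < m) {ν : Lˣ}
    (hν : (ν : L) ∉ Set.range (algebraMap K L)) :
    BSet L (span K (Set.range (rescaleZero b ν)) : Set W) ≠
      BSet L (span K (Set.range b) : Set W) :=
  BSet_span_range_unitsSMul_ne b (i := 0) (j := Fin.succ ⟨0, hm⟩)
    (by rwa [Fin.cons_zero, Fin.cons_succ, Pi.one_apply, Units.val_one, div_one])

end RescaleZero

theorem exists_distinct_subgeometries_same_splash_general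
    (K L : Type*) [Field K] [Field L] [Algebra K L]
    (r : ℕ) (hr : 3 ≤ r) (hrn : r - 1 ≤ Module.finrank K L)
    (F : IntermediateField K L) (hF : F ≠ ⊥) (hdvd : Module.finrank K F ∣ r - 1) :
    ∃ (V₀ V₁ : Submodule K (Fin r → L)) (U T : Submodule L (Fin r → L))
      (H H' : Submodule K (Fin r → L)),
      Module.finrank K V₀ = r ∧
      Submodule.span L (V₀ : Set (Fin r → L)) = ⊤ ∧
      Module.finrank K V₁ = r ∧
      Submodule.span L (V₁ : Set (Fin r → L)) = ⊤ ∧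
      Module.finrank L U = 2 ∧
      (∀ H'' : Submodule K (Fin r → L), H'' ≤ V₀ → Module.finrank K H'' = r - 1 →
        ¬ U ≤ Submodule.span L (H'' : Set (Fin r → L))) ∧
      (∀ H'' : Submodule K (Fin r → L), H'' ≤ V₁ → Module.finrank K H'' = r - 1 →
        ¬ U ≤ Submodule.span L (H'' : Set (Fin r → L))) ∧
      {P | P ∈ BSet L (V₀ : Set (Fin r → L)) ∧ P ≤ U} = {T} ∧
      {P | P ∈ BSet L (V₁ : Set (Fin r → L)) ∧ P ≤ U} = {T} ∧
      H ≤ V₀ ∧ Module.finrank K H = r - 1 ∧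
      H' ≤ V₁ ∧ Module.finrank K H' = r - 1 ∧
      BSet L (H : Set (Fin r → L)) = BSet L (H' : Set (Fin r → L)) ∧
      ¬ T ≤ Submodule.span L (H : Set (Fin r → L)) ∧
      BSet L (V₀ : Set (Fin r → L)) ≠ BSet L (V₁ : Set (Fin r → L)) ∧
      Splash K L V₀ U r = Splash K L V₁ U r := by
  obtain ⟨m, rfl⟩ : ∃ m, r = m + 1 := ⟨r - 1, by omega⟩
  rw [Nat.add_sub_cancel] at hrn hdvd
  simp only [Nat.add_sub_cancel]
  have hm : 2 ≤ m := by omega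
  have : FiniteDimensional K L := Module.finite_of_finrank_pos (by omega)
  obtain ⟨a, ha, haF⟩ := exists_linearIndependent_mul_mem_span_iff F hdvd hrn
  obtain ⟨μ, hμF, hμ⟩ := SetLike.exists_of_lt (bot_lt_iff_ne_bot.mpr hF)
  have hμ0 : μ ≠ 0 := fun h => hμ (h ▸ zero_mem _)
  let b := Pi.basisFun L (Fin (m + 1))
  let b' := rescaleZero b (Units.mk0 μ hμ0)
  have hline : tangentLine b' a = tangentLine b a := tangentLine_rescaleZero b _ a
  have htail : Fin.tail b' = Fin.tail b := tail_rescaleZero b _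
  have hcentre : span L {b' 0} = span L {b 0} := span_rescaleZero_zero b _
  refine ⟨span K (Set.range b), span K (Set.range b'), tangentLine b a, span L {b 0},
    span K (Set.range (Fin.tail b)), span K (Set.range (Fin.tail b')),
    by simp [finrank_span_range_basis], span_span_range_basis b,
    by simp [finrank_span_range_basis], span_span_range_basis b',
    finrank_tangentLine b (fun h => ha.ne_zero ⟨0, by omega⟩ (congrFun h _)),
    fun H => not_tangentLine_le_span b ha, fun H => hline ▸ not_tangentLine_le_span b' ha,
    points_le_tangentLine_eq_singleton b hm ha,
    hline ▸ hcentre ▸ points_le_tangentLine_eq_singleton b' hm ha,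
    span_mono (Set.range_comp_subset_range Fin.succ b),
    finrank_span_range_tail b,
    span_mono (Set.range_comp_subset_range Fin.succ b'),
    finrank_span_range_tail b', by rw [htail],
    not_span_basis_zero_le_span_range_tail b,
    (BSet_span_range_rescaleZero_ne b (by omega)
      (fun h => hμ (IntermediateField.mem_bot.mpr h))).symm,
    (splash_rescaleZero b ha (haF μ hμF hμ0)).symm⟩

/-- if `gcd(n, r-1) > 1`, there exist two distinct `q`-subgeometries
with a common tangent line, common centre, a common hyperplane avoiding the centre,
and the same tangent splash. -/
theorem exists_distinct_subgeometries_same_splash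
    (K L : Type*) [Field K] [Field L] [Algebra K L] [Fintype K] [Fintype L]
    (r n : ℕ) (hr : 3 ≤ r) (hrn : r ≤ n) (hrank : Module.finrank K L = n)
    (hgcd : 1 < Nat.gcd n (r - 1)) :
    ∃ (V₀ V₁ : Submodule K (Fin r → L)) (U T : Submodule L (Fin r → L))
      (H H' : Submodule K (Fin r → L)),
      Module.finrank K V₀ = r ∧
      Submodule.span L (V₀ : Set (Fin r → L)) = ⊤ ∧
      Module.finrank K V₁ = r ∧
      Submodule.span L (V₁ : Set (Fin r → L)) = ⊤ ∧
      Module.finrank L U = 2 ∧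
      (∀ H'' : Submodule K (Fin r → L), H'' ≤ V₀ → Module.finrank K H'' = r - 1 →
        ¬ U ≤ Submodule.span L (H'' : Set (Fin r → L))) ∧
      (∀ H'' : Submodule K (Fin r → L), H'' ≤ V₁ → Module.finrank K H'' = r - 1 →
        ¬ U ≤ Submodule.span L (H'' : Set (Fin r → L))) ∧
      {P | P ∈ BSet L (V₀ : Set (Fin r → L)) ∧ P ≤ U} = {T} ∧
      {P | P ∈ BSet L (V₁ : Set (Fin r → L)) ∧ P ≤ U} = {T} ∧
      H ≤ V₀ ∧ Module.finrank K H = r - 1 ∧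
      H' ≤ V₁ ∧ Module.finrank K H' = r - 1 ∧
      BSet L (H : Set (Fin r → L)) = BSet L (H' : Set (Fin r → L)) ∧
      ¬ T ≤ Submodule.span L (H : Set (Fin r → L)) ∧
      BSet L (V₀ : Set (Fin r → L)) ≠ BSet L (V₁ : Set (Fin r → L)) ∧
      Splash K L V₀ U r = Splash K L V₁ U r := by
  subst hrank
  obtain ⟨F, hF⟩ := exists_intermediateField_finrank_eq (Nat.gcd_dvd_left (finrank K L) (r - 1))
  exact exists_distinct_subgeometries_same_splash_general K L r hr (by omega) F
    (fun h => hgcd.ne' (by rw [← hF, h, IntermediateField.finrank_bot]))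
    (hF ▸ Nat.gcd_dvd_right _ _)
end

section
/- Let 3 ≤ r ≤ n. Let π₀ = B(V₀) and π₁ = B(V₁) be q-subgeometries of PG(r-1,q^n), both tangent to the line l_∞ = PG(U), with l_∞ not contained in the extension of any hyperplane of π₀ or of π₁. If S(π₀,l_∞) = S(π₁,l_∞), then there exists an L-linear automorphism κ of L^r such that κ(U) = U and the induced map on points carries π₀ onto π₁, i.e. { L·κ(v) : L·v ∈ π₀ } = π₁. -/
open Submodule Module

/-!
Let `V` be a `K`-form of `W`. A functional `f` on `V` extends to an `L`-linear functional `f_L` on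
`W`, whose kernel is the extension of the hyperplane `ker f`; so the splash consists of the points
of the line killed by some `f_L ≠ 0`. Choose the tangent point `⟨v⟩` and a suitable second point
`⟨y⟩` of the line: then `f ↦ (f v, f_L y)` is an isomorphism of the dual of `V` onto `K × A` for a
`K`-subspace `A` of `L`, and the splash is the club formed by `⟨v⟩` and the points `⟨s v + y⟩` with
`s ∈ A`. Equal clubs have proportional subspaces, `A' = c A`: this is immediate when the heads
agree, and otherwise `A` and `A'` are, up to a translation of `y` and a scalar, exchanged by
inversion, so that Hua's identity applies. Hence `K × A` and `K × A'` are isomorphic; dualizing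
gives `V ≃ V'`, and extending scalars gives the projectivity, which maps `v` to `v'` and `y` to a
multiple of `y'`.
-/

section DivisionRing

variable {D : Type*} [DivisionRing D] {A B : AddSubgroup D}

/-- **Hua's identity**. -/
theorem inv_inv_add_inv_sub_inv {a b : D} (ha : a ≠ 0) (hb : b ≠ 0) (hab : b⁻¹ - a ≠ 0) :
    (a⁻¹ + (b⁻¹ - a)⁻¹)⁻¹ = a - a * b * a := by
  rw [inv_add_inv' ha hab, add_sub_cancel]
  simp only [mul_inv_rev, inv_inv, ← mul_assoc, sub_mul, inv_mul_cancel₀ hb, one_mul]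

theorem mul_mul_mem_of_mem_iff_inv_mem (h : ∀ x ≠ 0, x ∈ A ↔ x⁻¹ ∈ B) {a b : D}
    (ha : a ∈ A) (hb : b ∈ B) : a * b * a ∈ A := by
  rcases eq_or_ne a 0 with rfl | ha₀
  · simp
  rcases eq_or_ne b 0 with rfl | hb₀
  · simp
  by_cases hab : b⁻¹ - a = 0
  · rwa [← sub_eq_zero.mp hab, inv_mul_cancel₀ hb₀, one_mul, sub_eq_zero.mp hab]
  have hbA : b⁻¹ ∈ A := (h _ (inv_ne_zero hb₀)).2 (by rwa [inv_inv])
  have hsum : a⁻¹ + (b⁻¹ - a)⁻¹ ∈ B :=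
    add_mem ((h a ha₀).1 ha) ((h _ hab).1 (sub_mem hbA ha))
  have hsum₀ : a⁻¹ + (b⁻¹ - a)⁻¹ ≠ 0 := by
    rw [inv_add_inv' ha₀ hab, add_sub_cancel]
    exact mul_ne_zero (mul_ne_zero (inv_ne_zero ha₀) (inv_ne_zero hb₀)) (inv_ne_zero hab)
  have hdiff : a - a * b * a ∈ A := by
    rw [← inv_inv_add_inv_sub_inv ha₀ hb₀ hab]
    exact (h _ (inv_ne_zero hsum₀)).2 (by rwa [inv_inv])
  simpa only [sub_sub_cancel] using sub_mem ha hdiff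

theorem mem_iff_inv_mul_mul_inv_mem (h : ∀ x ≠ 0, x ∈ A ↔ x⁻¹ ∈ B) {a : D} (ha : a ∈ A)
    (ha₀ : a ≠ 0) (x : D) : x ∈ A ↔ a⁻¹ * x * a⁻¹ ∈ B := by
  have h' : ∀ x ≠ 0, x ∈ B ↔ x⁻¹ ∈ A := fun x hx₀ => by rw [h _ (inv_ne_zero hx₀), inv_inv]
  refine ⟨mul_mul_mem_of_mem_iff_inv_mem h' ((h a ha₀).1 ha), fun hx => ?_⟩
  simpa [← mul_assoc, ha₀] using mul_mul_mem_of_mem_iff_inv_mem h ha hx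

end DivisionRing

section Line

variable {L : Type*} [Field L] {W : Type*} [AddCommGroup W] [Module L W]

variable {v y : W}

theorem exists_ne_zero_span_pair_eq_of_dual {U : Submodule L W} (hU : finrank L U = 2)
    (hv : v ∈ U) {f : Dual L W} (hfv : f v ≠ 0) : ∃ y, y ≠ 0 ∧ f y = 0 ∧ span L {v, y} = U := by
  have : FiniteDimensional L U := .of_finrank_pos (by rw [hU]; exact two_pos)
  obtain ⟨⟨y, hy⟩, hfy, hy₀⟩ := (Submodule.ne_bot_iff _).1 <|
    (f.domRestrict U).ker_ne_bot_of_finrank_lt (by rw [finrank_self, hU]; exact one_lt_two)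
  replace hfy : f y = 0 := hfy
  replace hy₀ : y ≠ 0 := fun h => hy₀ (Subtype.ext h)
  have hvy : LinearIndependent L ![v, y] := LinearIndependent.pair_iff.2 fun s t hst => by
    have hs : s = 0 := by simpa [hfy, hfv] using congrArg f hst
    exact ⟨hs, by simpa [hs, hy₀] using hst⟩
  refine ⟨y, hy₀, hfy, eq_of_le_of_finrank_eq (span_le.2 (Set.pair_subset hv hy)) ?_⟩
  rw [← Matrix.range_cons_cons_empty, finrank_span_eq_card hvy, Fintype.card_fin, hU]

theorem map_span_pair_eq {W' : Type*} [AddCommGroup W'] [Module L W'] {v' y' : W'}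
    (κ : W →ₗ[L] W') {c : Lˣ} (hv : κ v = v') (hy : κ y = c • y') :
    (span L {v, y}).map κ = span L {v', y'} := by
  rw [map_span, Set.image_pair, hv, hy, span_insert, span_singleton_group_smul_eq, ← span_insert]

theorem eq_span_or_eq_span_smul_add {P : Submodule L W} (hP : P ≤ span L {v, y})
    (hP₁ : finrank L P = 1) : P = L ∙ v ∨ ∃ s : L, P = L ∙ (s • v + y) := by
  obtain ⟨w, hwP, hw₀⟩ := P.ne_bot_iff.1 (by rintro rfl; simp at hP₁)
  obtain ⟨s, t, rfl⟩ := mem_span_pair.1 (hP hwP)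
  rw [eq_span_singleton_of_mem_of_finrank_eq_one hP₁ hwP hw₀]
  rcases eq_or_ne t 0 with rfl | ht
  · have hs : s ≠ 0 := by rintro rfl; simp at hw₀
    rw [zero_smul, add_zero]
    exact .inl (span_singleton_smul_eq hs.isUnit v)
  · refine .inr ⟨t⁻¹ * s, ?_⟩
    rw [← span_singleton_smul_eq (inv_ne_zero ht).isUnit, smul_add, smul_smul, inv_smul_smul₀ ht]

/-- The club with head `⟨v⟩` over `A`. For a nonzero `K`-subspace `A` of `L` this is the `K`-linear
set of the points `⟨s v + k y⟩` with `(s, k) ∈ A × K` not `(0, 0)`; normalising `k` to `0` or `1`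
gives the description below, which refers to neither `K` nor the structure of `A`. -/
def club (A : Set L) (v y : W) : Set (Submodule L W) :=
  insert (L ∙ v) ((fun s => L ∙ (s • v + y)) '' A)

theorem span_smul_add_injective (h : LinearIndependent L ![v, y]) :
    Function.Injective fun s : L => L ∙ (s • v + y) := by
  intro s t hst
  obtain ⟨a, ha⟩ := span_singleton_eq_span_singleton.1 hst
  rw [Units.smul_def] at ha
  obtain ⟨h₁, h₂⟩ := LinearIndependent.pair_iff.1 h (a * s - t) (a - 1)
    (by linear_combination (norm := module) ha)
  linear_combination h₁ - s * h₂

theorem span_ne_span_smul_add (h : LinearIndependent L ![v, y]) (s : L) :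
    (L ∙ v) ≠ L ∙ (s • v + y) := by
  intro hs
  obtain ⟨a, ha⟩ := span_singleton_eq_span_singleton.1 hs
  rw [Units.smul_def] at ha
  exact one_ne_zero (LinearIndependent.pair_iff.1 h (s - a) 1
    (by linear_combination (norm := module) -ha)).2

theorem span_smul_add_mem_club_iff (h : LinearIndependent L ![v, y]) {A : Set L} {s : L} :
    (L ∙ (s • v + y)) ∈ club A v y ↔ s ∈ A := by
  rw [club, Set.mem_insert_iff, or_iff_right (span_ne_span_smul_add h s).symm,
    (span_smul_add_injective h).mem_set_image]

theorem club_smul_add {A : AddSubgroup L} {s : L} (hs : s ∈ A) (v y : W) :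
    club (A : Set L) v (s • v + y) = club (A : Set L) v y := by
  have : (fun t : L => L ∙ (t • v + (s • v + y))) = (fun t => L ∙ (t • v + y)) ∘ (· + s) := by
    funext t
    simp only [Function.comp_apply, add_smul, add_assoc]
  have hA : (· + s) '' (A : Set L) = A := by
    ext t
    rw [Set.image_add_right, Set.mem_preimage, SetLike.mem_coe,
      A.add_mem_cancel_right (neg_mem hs), SetLike.mem_coe]
  rw [club, this, Set.image_comp, hA, club]

theorem mem_iff_div_mul_mem_of_club_eq {A A' : Set L} (h : LinearIndependent L ![v, y])
    {a b : Lˣ} (hclub : club A v y = club A' (a • v) (b • y)) (x : L) :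
    x ∈ A ↔ ↑(b / a) * x ∈ A' := by
  have h' : LinearIndependent L ![a • v, b • y] :=
    (LinearIndependent.pair_smul_smul_iff a.isUnit b.isUnit).2 h
  have hx : b • (x • v + y) = (↑(b / a) * x) • a • v + b • y := by
    rw [smul_add]
    congr 1
    simp only [Units.smul_def, smul_smul, Units.val_div_eq_div_val]
    congr 1
    field_simp
  rw [← span_smul_add_mem_club_iff h, hclub, ← span_singleton_group_smul_eq L b, hx,
    span_smul_add_mem_club_iff h']

theorem mem_iff_div_mul_inv_mem_of_club_eq {A A' : Set L} (h : LinearIndependent L ![v, y])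
    {a b : Lˣ} (hclub : club A v y = club A' (a • y) (b • v)) {x : L} (hx₀ : x ≠ 0) :
    x ∈ A ↔ ↑(b / a) * x⁻¹ ∈ A' := by
  have h' : LinearIndependent L ![a • y, b • v] :=
    (LinearIndependent.pair_smul_smul_iff a.isUnit b.isUnit).2 (LinearIndependent.pair_symm_iff.1 h)
  have hx : (b * (Units.mk0 x hx₀)⁻¹) • (x • v + y) = (↑(b / a) * x⁻¹) • a • y + b • v := by
    rw [smul_add, add_comm]
    congr 1 <;>
    · simp only [Units.smul_def, smul_smul, Units.val_div_eq_div_val, Units.val_mul,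
        Units.val_inv_eq_inv_val, Units.val_mk0]
      congr 1
      field_simp
  rw [← span_smul_add_mem_club_iff h, hclub, ← span_singleton_group_smul_eq L (b * _), hx,
    span_smul_add_mem_club_iff h']

theorem exists_units_mem_iff_mul_mem_of_club_eq {A A' : AddSubgroup L} (hA : A ≠ ⊥)
    {v y v' y' : W} (h : LinearIndependent L ![v, y])
    (hclub : club (A : Set L) v y = club (A' : Set L) v' y') :
    ∃ c : Lˣ, ∀ x, x ∈ A ↔ ↑c * x ∈ A' := by
  by_cases hv : (L ∙ v) = L ∙ v'
  · obtain ⟨a, rfl⟩ := span_singleton_eq_span_singleton.1 hv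
    have hy : (L ∙ ((0 : L) • v + y)) ∈ club (A' : Set L) (a • v) y' :=
      hclub ▸ (span_smul_add_mem_club_iff h).2 A.zero_mem
    obtain ⟨t, ht, hty⟩ := hy.resolve_left fun hy => span_ne_span_smul_add h 0 (hv.trans hy.symm)
    obtain ⟨b, hb⟩ := span_singleton_eq_span_singleton.1 hty.symm
    rw [zero_smul, zero_add] at hb
    rw [← club_smul_add ht, ← hb] at hclub
    exact ⟨b / a, mem_iff_div_mul_mem_of_club_eq h hclub⟩
  · have hv'_mem : (L ∙ v') ∈ club (A : Set L) v y := hclub ▸ Set.mem_insert _ _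
    obtain ⟨s, hs, hsv'⟩ := hv'_mem.resolve_left (Ne.symm hv)
    have hv_mem : (L ∙ v) ∈ club (A' : Set L) v' y' := hclub ▸ Set.mem_insert _ _
    obtain ⟨t, ht, htv⟩ := hv_mem.resolve_left hv
    obtain ⟨a, rfl⟩ := span_singleton_eq_span_singleton.1 hsv'
    obtain ⟨b, hb⟩ := span_singleton_eq_span_singleton.1 htv.symm
    rw [← club_smul_add hs, ← club_smul_add ht, ← hb] at hclub
    have hinv : ∀ x ≠ 0, x ∈ A ↔ x⁻¹ ∈ A'.comap (AddMonoidHom.mulLeft ↑(b / a)) := fun x =>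
      mem_iff_div_mul_inv_mem_of_club_eq ((LinearIndependent.pair_add_smul_right_iff s).2 h) hclub
    obtain ⟨d, hd, hd₀⟩ := A.bot_or_exists_ne_zero.resolve_left hA
    refine ⟨b / a * (Units.mk0 d hd₀ ^ 2)⁻¹, fun x => ?_⟩
    rw [mem_iff_inv_mul_mul_inv_mem hinv hd hd₀, AddSubgroup.mem_comap,
      AddMonoidHom.coe_mulLeft]
    simp only [Units.val_mul, Units.val_inv_eq_inv_val, Units.val_pow_eq_pow_val, Units.val_mk0]
    ring_nf

end Line

section BaseChange

variable {R S : Type*} [CommRing R] [CommRing S] [Algebra R S] {V V' W W' : Type*}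
  [AddCommGroup V] [Module R V] [AddCommGroup V'] [Module R V']
  [AddCommGroup W] [Module R W] [Module S W] [IsScalarTower R S W]
  [AddCommGroup W'] [Module R W'] [Module S W'] [IsScalarTower R S W']
  {j : V →ₗ[R] W} {j' : V' →ₗ[R] W'}

theorem exists_equiv_of_dual_equiv [IsReflexive R V] [IsReflexive R V']
    (hj : IsBaseChange S j) (hj' : IsBaseChange S j') (ψ : Dual R V' ≃ₗ[R] Dual R V) :
    ∃ (φ : V ≃ₗ[R] V') (κ : W ≃ₗ[S] W'), (∀ x, κ (j x) = j' (φ x)) ∧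
      ∀ f w, hj'.toDual f (κ w) = hj.toDual (ψ f) w := by
  let φ : V ≃ₗ[R] V' := evalEquiv R V ≪≫ₗ ψ.dualMap ≪≫ₗ (evalEquiv R V').symm
  have hφ (f : Dual R V') (x : V) : f (φ x) = ψ f x := by simp [φ]
  let κ : W ≃ₗ[S] W' := hj.equiv.symm ≪≫ₗ φ.baseChange R S V V' ≪≫ₗ hj'.equiv
  have hκ (x : V) : κ (j x) = j' (φ x) := by simp [κ]
  refine ⟨φ, κ, hκ, fun f => LinearMap.congr_fun (f := (hj'.toDual f) ∘ₗ κ.toLinearMap) ?_⟩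
  refine hj.algHom_ext _ _ fun x => ?_
  simp only [LinearMap.comp_apply, LinearEquiv.coe_coe, hκ, hj.toDual_comp_apply,
    hj'.toDual_comp_apply, hφ]

theorem eq_zero_of_forall_toDual_eq_zero [Free R V] [Module.Finite R V]
    (hj : IsBaseChange S j) {w : W} (h : ∀ f, hj.toDual f w = 0) : w = 0 := by
  have := hj.free
  refine (forall_dual_apply_eq_zero_iff S w).1 fun g => ?_
  induction g using hj.dual.inductionOn with
  | zero => rfl
  | tmul f => exact h f
  | smul s g hg => rw [LinearMap.smul_apply, hg, smul_zero]
  | add g₁ g₂ h₁ h₂ => rw [LinearMap.add_apply, h₁, h₂, add_zero]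

theorem isBaseChange_of_span_range_eq_top {K L V W : Type*} [Field K] [Field L] [Algebra K L]
    [AddCommGroup V] [Module K V] [FiniteDimensional K V] [AddCommGroup W] [Module K W]
    [Module L W] [IsScalarTower K L W] [FiniteDimensional L W]
    {j : V →ₗ[K] W} (hspan : span L (Set.range j) = ⊤) (hrank : finrank K V = finrank L W) :
    IsBaseChange L j := by
  have hsurj : Function.Surjective (j.liftBaseChange L) := by
    rw [← LinearMap.range_eq_top, LinearMap.range_liftBaseChange, LinearMap.coe_range, hspan]
  have hinj : Function.Injective (j.liftBaseChange L) :=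
    (LinearMap.injective_iff_surjective_of_finrank_eq_finrank
      (by rw [finrank_baseChange, hrank])).2 hsurj
  exact .of_equiv (.ofBijective (j.liftBaseChange L) ⟨hinj, hsurj⟩) fun x =>
    j.liftBaseChange_one_tmul L x

end BaseChange

section Splash

variable {K L : Type*} [Field K] [Field L] [Algebra K L] {W : Type*}
  [AddCommGroup W] [Module K W] [Module L W] [IsScalarTower K L W]
  {V : Submodule K W} {U : Submodule L W}

theorem toDual_apply_coe (hV : IsBaseChange L V.subtype) (f : Dual K V) (x : V) :
    hV.toDual f (x : W) = algebraMap K L (f x) :=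
  hV.toDual_comp_apply f x

theorem span_map_ker_eq_ker_toDual (hV : IsBaseChange L V.subtype) {f : Dual K V} (hf : f ≠ 0) :
    span L ((LinearMap.ker f).map V.subtype : Set W) = LinearMap.ker (hV.toDual f) := by
  apply le_antisymm
  · rw [span_le]
    rintro _ ⟨x, hx, rfl⟩
    rw [SetLike.mem_coe, LinearMap.mem_ker, hV.toDual_comp_apply, LinearMap.mem_ker.1 hx, map_zero]
  · obtain ⟨x₀, hx₀⟩ : ∃ x₀, f x₀ = 1 := LinearMap.surjective hf 1
    have hproj (w : W) : w - hV.toDual f w • (x₀ : W) ∈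
        span L ((LinearMap.ker f).map V.subtype : Set W) := by
      induction w using hV.inductionOn with
      | zero => simp
      | tmul x =>
        refine subset_span ⟨x - f x • x₀, by simp [hx₀], ?_⟩
        rw [map_sub, map_smul, subtype_apply, subtype_apply, toDual_apply_coe, algebraMap_smul]
      | smul a w hw => simpa [smul_sub, mul_smul] using smul_mem _ a hw
      | add w₁ w₂ h₁ h₂ =>
        rw [map_add, add_smul, add_sub_add_comm]
        exact add_mem h₁ h₂
    intro w hw
    simpa [LinearMap.mem_ker.1 hw] using hproj w

theorem span_singleton_mem_splash_iff [FiniteDimensional K V] (hV : IsBaseChange L V.subtype)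
    {w : W} (hw : w ≠ 0) :
    (L ∙ w) ∈ Splash K L V U (finrank K V) ↔
      w ∈ U ∧ ∃ f : Dual K V, f ≠ 0 ∧ hV.toDual f w = 0 := by
  simp only [Splash, Set.mem_ofPred_eq, finrank_span_singleton hw, true_and,
    span_singleton_le_iff_mem]
  refine and_congr_right fun _ => ⟨?_, ?_⟩
  · rintro ⟨H, hHV, hH, hwH⟩
    have : Nontrivial V := by
      by_contra! hV₀
      exact hw <| eq_zero_of_forall_toDual_eq_zero hV fun f => by
        rw [Subsingleton.elim f 0, map_zero, LinearMap.zero_apply]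
    have hlt : H.comap V.subtype < ⊤ := by
      refine lt_top_of_finrank_lt_finrank ?_
      rw [(comapSubtypeEquivOfLe hHV).finrank_eq, hH]
      exact Nat.sub_one_lt finrank_pos.ne'
    obtain ⟨f, hf, hHf⟩ := exists_le_ker_of_lt_top _ hlt
    refine ⟨f, hf, LinearMap.mem_ker.1 ?_⟩
    rw [← span_map_ker_eq_ker_toDual hV hf]
    exact span_mono (fun x hx => mem_map.2 ⟨⟨x, hHV hx⟩, hHf hx, rfl⟩) hwH
  · rintro ⟨f, hf, hwf⟩
    refine ⟨(LinearMap.ker f).map V.subtype, map_subtype_le _ _, ?_, ?_⟩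
    · rw [finrank_map_subtype_eq, ← Module.Dual.finrank_ker_add_one_of_ne_zero hf,
        Nat.add_sub_cancel]
    · rwa [span_map_ker_eq_ker_toDual hV hf]

/-- Coordinates for the subgeometry `B(V)` on the line through a point `⟨v⟩` of `B(V)` and a point
`⟨y⟩` of `PG(W)`: evaluating functionals at `v`, and their `L`-linear extensions at `y`, identifies
the dual of `V` with `K × A`. The set `A` of values at `y` is a parameter because it determines the
splash of `B(V)` on this line. -/
structure ClubFrame (hV : IsBaseChange L V.subtype) (A : Submodule K L) (v : V) (y : W) where
  coords : Dual K V ≃ₗ[K] K × A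
  coords_fst (f : Dual K V) : (coords f).1 = f v
  coords_snd (f : Dual K V) : ((coords f).2 : L) = hV.toDual f y

namespace ClubFrame

variable {W' : Type*} [AddCommGroup W'] [Module K W'] [Module L W'] [IsScalarTower K L W']
  {V' : Submodule K W'} {hV : IsBaseChange L V.subtype} {hV' : IsBaseChange L V'.subtype}
  {A A' : Submodule K L} {v : V} {v' : V'} {y : W} {y' : W'}

theorem toDual_apply (F : ClubFrame hV A v y) (f : Dual K V) (s t : L) :
    hV.toDual f (s • (v : W) + t • y) =
      s * algebraMap K L (F.coords f).1 + t * (F.coords f).2 := by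
  rw [map_add, map_smul, map_smul, toDual_apply_coe, F.coords_fst, F.coords_snd, smul_eq_mul,
    smul_eq_mul]

theorem toDual_symm_apply (F : ClubFrame hV A v y) (k : K) (a : A) (s t : L) :
    hV.toDual (F.coords.symm (k, a)) (s • (v : W) + t • y) = s * algebraMap K L k + t * a := by
  rw [F.toDual_apply, LinearEquiv.apply_symm_apply]

theorem linearIndependent (F : ClubFrame hV A v y) (hA : A ≠ ⊥) :
    LinearIndependent L ![(v : W), y] := by
  obtain ⟨a, ha, ha₀⟩ := A.ne_bot_iff.1 hA
  refine LinearIndependent.pair_iff.2 fun s t hst => ?_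
  have hs := F.toDual_symm_apply 1 0 s t
  have ht := F.toDual_symm_apply 0 ⟨a, ha⟩ s t
  rw [hst, map_zero] at hs ht
  simp only [map_zero, map_one, mul_one, mul_zero, add_zero, zero_add, ZeroMemClass.coe_zero]
    at hs ht
  exact ⟨hs.symm, (mul_eq_zero.1 ht.symm).resolve_right ha₀⟩

theorem exists_equiv [FiniteDimensional K V] [FiniteDimensional K V'] (F : ClubFrame hV A v y)
    (F' : ClubFrame hV' A' v' y') {c : Lˣ} (hc : ∀ x, x ∈ A ↔ c * x ∈ A') :
    ∃ κ : W ≃ₗ[L] W', V.map (κ.toLinearMap.restrictScalars K) = V' ∧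
      κ v = v' ∧ κ y = c⁻¹ • y' := by
  have hmap : A.map (c.mulLeftLinearEquiv K L : L →ₗ[K] L) = A' := by
    ext x
    rw [map_equiv_eq_comap_symm, mem_comap, hc, LinearEquiv.coe_coe,
      Units.symm_mulLeftLinearEquiv_apply, Units.mul_inv_cancel_left]
  let ψ : Dual K V' ≃ₗ[K] Dual K V := F'.coords ≪≫ₗ
    .prodCongr (.refl K K) ((c.mulLeftLinearEquiv K L).ofSubmodules A A' hmap).symm ≪≫ₗ
    F.coords.symm
  obtain ⟨φ, κ, hκφ, hκ⟩ := exists_equiv_of_dual_equiv hV hV' ψ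
  have hκF (f : Dual K V') (s t : L) : hV'.toDual f (κ (s • (v : W) + t • y)) =
      hV'.toDual f (s • (v' : W') + (t * ↑c⁻¹) • y') := by
    rw [hκ, F.toDual_apply, F'.toDual_apply]
    simp only [ψ, LinearEquiv.trans_apply, LinearEquiv.apply_symm_apply,
      LinearEquiv.prodCongr_apply, LinearEquiv.refl_apply, LinearEquiv.ofSubmodules_symm_apply,
      Units.symm_mulLeftLinearEquiv_apply, mul_assoc]
  have hext {w w' : W'} (h : ∀ f, hV'.toDual f w = hV'.toDual f w') : w = w' :=
    sub_eq_zero.1 <| eq_zero_of_forall_toDual_eq_zero hV' fun f => by rw [map_sub, h, sub_self]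
  refine ⟨κ, ?_, ?_, ?_⟩
  · ext w
    constructor
    · rintro ⟨x, hx, rfl⟩
      exact (hκφ ⟨x, hx⟩).symm ▸ (φ ⟨x, hx⟩).2
    · intro hw
      obtain ⟨x, hx⟩ := φ.surjective ⟨w, hw⟩
      exact ⟨x, x.2, (hκφ x).trans (congrArg Subtype.val hx)⟩
  · simpa only [one_smul, zero_smul, zero_mul, add_zero] using hext (hκF · 1 0)
  · simpa only [one_smul, zero_smul, one_mul, zero_add, Units.smul_def] using hext (hκF · 0 1)

theorem span_smul_add_smul_mem_splash_iff [FiniteDimensional K V] (F : ClubFrame hV A v y)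
    (hU : span L {(v : W), y} = U) {s t : L} (hst : s • (v : W) + t • y ≠ 0) :
    (L ∙ (s • (v : W) + t • y)) ∈ Splash K L V U (finrank K V) ↔
      ∃ p : K × A, p ≠ 0 ∧ s * algebraMap K L p.1 + t * p.2 = 0 := by
  have hwU : s • (v : W) + t • y ∈ U := hU ▸ mem_span_pair.2 ⟨s, t, rfl⟩
  rw [span_singleton_mem_splash_iff hV hst, and_iff_right hwU, F.coords.surjective.exists]
  exact exists_congr fun f => by
    rw [ne_eq, ne_eq, LinearEquiv.map_eq_zero_iff, F.toDual_apply]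

theorem span_mem_splash [FiniteDimensional K V] (F : ClubFrame hV A v y) (hA : A ≠ ⊥)
    (hU : span L {(v : W), y} = U) : (L ∙ (v : W)) ∈ Splash K L V U (finrank K V) := by
  obtain ⟨a, ha, ha₀⟩ := A.ne_bot_iff.1 hA
  have h := F.span_smul_add_smul_mem_splash_iff hU (s := 1) (t := 0)
    (by simpa using (F.linearIndependent hA).ne_zero 0)
  rw [one_smul, zero_smul, add_zero] at h
  exact h.2 ⟨(0, ⟨a, ha⟩), by simpa using ha₀, by simp⟩

theorem span_smul_add_mem_splash_iff [FiniteDimensional K V] (F : ClubFrame hV A v y)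
    (hA : A ≠ ⊥) (hU : span L {(v : W), y} = U) {s : L} :
    (L ∙ (s • (v : W) + y)) ∈ Splash K L V U (finrank K V) ↔ s ∈ A := by
  have h := F.span_smul_add_smul_mem_splash_iff hU (s := s) (t := 1) fun h =>
    one_ne_zero (LinearIndependent.pair_iff.1 (F.linearIndependent hA) s 1 h).2
  simp only [one_smul, one_mul] at h
  rw [h]
  refine ⟨?_, fun hs => ⟨(-1, ⟨s, hs⟩), by simp, by simp⟩⟩
  rintro ⟨⟨k, a⟩, hka, hska⟩
  have hk : k ≠ 0 := by
    rintro rfl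
    rw [map_zero, mul_zero, zero_add, ZeroMemClass.coe_eq_zero] at hska
    exact hka (Prod.ext rfl hska)
  have hs : s = -(k⁻¹ • (a : L)) := by
    rw [eq_neg_iff_add_eq_zero, ← smul_right_inj hk, smul_add, smul_inv_smul₀ hk, smul_zero,
      Algebra.smul_def, mul_comm, hska]
  exact hs ▸ neg_mem (A.smul_mem _ a.2)

theorem splash_eq_club [FiniteDimensional K V] (F : ClubFrame hV A v y) (hA : A ≠ ⊥)
    (hU : span L {(v : W), y} = U) :
    Splash K L V U (finrank K V) = club (A : Set L) (v : W) y := by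
  ext P
  constructor
  · intro hP
    rcases eq_span_or_eq_span_smul_add (hU ▸ hP.2.1) hP.1 with rfl | ⟨s, rfl⟩
    · exact Set.mem_insert _ _
    · exact .inr ⟨s, (F.span_smul_add_mem_splash_iff hA hU).1 hP, rfl⟩
  · rintro (rfl | ⟨s, hs, rfl⟩)
    exacts [F.span_mem_splash hA hU, (F.span_smul_add_mem_splash_iff hA hU).2 hs]

end ClubFrame

theorem not_le_ker_toDual [FiniteDimensional K V] (hV : IsBaseChange L V.subtype)
    (hext : ∀ H : Submodule K W, H ≤ V → finrank K H = finrank K V - 1 → ¬ U ≤ span L (H : Set W))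
    {f : Dual K V} (hf : f ≠ 0) : ¬ U ≤ LinearMap.ker (hV.toDual f) := by
  rw [← span_map_ker_eq_ker_toDual hV hf]
  refine hext _ (map_subtype_le _ _) ?_
  rw [finrank_map_subtype_eq, ← Module.Dual.finrank_ker_add_one_of_ne_zero hf, Nat.add_sub_cancel]

theorem exists_clubFrame [FiniteDimensional K V] (hV : IsBaseChange L V.subtype)
    (hU : finrank L U = 2) (htangent : ∃ P ∈ BSet L (V : Set W), P ≤ U)
    (hext : ∀ f : Dual K V, f ≠ 0 → ¬ U ≤ LinearMap.ker (hV.toDual f)) :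
    ∃ (A : Submodule K L) (v : V) (y : W),
      A ≠ ⊥ ∧ span L {(v : W), y} = U ∧ Nonempty (ClubFrame hV A v y) := by
  obtain ⟨_, ⟨v, hvV, hv₀, rfl⟩, hvU⟩ := htangent
  lift v to V using hvV
  rw [span_singleton_le_iff_mem] at hvU
  have hv : v ≠ 0 := fun h => hv₀ (congrArg Subtype.val h)
  obtain ⟨g, hgv⟩ := Projective.exists_dual_eq_one K hv
  have hgv' : hV.toDual g v = 1 := by rw [toDual_apply_coe, hgv, map_one]
  obtain ⟨y, hy₀, hgy, hvy⟩ :=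
    exists_ne_zero_span_pair_eq_of_dual hU hvU (hgv'.trans_ne one_ne_zero)
  let ev : Dual K V →ₗ[K] L := (LinearMap.applyₗ y).restrictScalars K ∘ₗ hV.toDual
  have hev (f : Dual K V) : ev f = hV.toDual f y := rfl
  have hinj : Function.Injective ((Dual.eval K V v).prod ev.rangeRestrict) := by
    refine (injective_iff_map_eq_zero _).2 fun f hf => by_contra fun hf₀ => ?_
    refine hext f hf₀ (hvy ▸ span_le.2 (Set.pair_subset ?_ ?_))
    · have hfv : f v = 0 := congrArg Prod.fst hf
      rw [SetLike.mem_coe, LinearMap.mem_ker, toDual_apply_coe, hfv, map_zero]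
    · exact congrArg (fun p => (p.2 : L)) hf
  have hsurj : Function.Surjective ((Dual.eval K V v).prod ev.rangeRestrict) := by
    rintro ⟨k, _, f, rfl⟩
    refine ⟨f + (k - f v) • g, Prod.ext ?_ (Subtype.ext ?_)⟩
    · simp [hgv]
    · simp [hev, hgy]
  refine ⟨LinearMap.range ev, v, y, ?_, hvy,
    ⟨.ofBijective _ ⟨hinj, hsurj⟩, fun f => rfl, fun f => rfl⟩⟩
  rw [ne_eq, LinearMap.range_eq_bot]
  exact fun h => hy₀ <| eq_zero_of_forall_toDual_eq_zero hV fun f => LinearMap.congr_fun h f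

theorem image_bSet {W' : Type*} [AddCommGroup W'] [Module K W'] [Module L W']
    [IsScalarTower K L W'] {V' : Submodule K W'} (κ : W ≃ₗ[L] W')
    (h : V.map (κ.toLinearMap.restrictScalars K) = V') :
    (fun P => map (κ : W →ₗ[L] W') P) '' BSet L (V : Set W) = BSet L (V' : Set W') := by
  subst h
  ext P
  constructor
  · rintro ⟨_, ⟨x, hx, hx₀, rfl⟩, rfl⟩
    exact ⟨κ x, ⟨x, hx, rfl⟩, by simpa using hx₀, by simp [map_span]⟩
  · rintro ⟨_, ⟨x, hx, rfl⟩, hx₀, rfl⟩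
    exact ⟨_, ⟨x, hx, by rintro rfl; simp at hx₀, rfl⟩, by simp [map_span]⟩

end Splash

theorem same_splash_implies_projectively_equivalent_general
    {K L W : Type*} [Field K] [Field L] [Algebra K L]
    [AddCommGroup W] [Module K W] [Module L W] [IsScalarTower K L W] [FiniteDimensional L W]
    {r : ℕ} (hW : finrank L W = r) {V₀ V₁ : Submodule K W}
    (hV₀rank : finrank K V₀ = r) (hV₀span : span L (V₀ : Set W) = ⊤)
    (hV₁rank : finrank K V₁ = r) (hV₁span : span L (V₁ : Set W) = ⊤)
    {U : Submodule L W} (hU : finrank L U = 2)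
    (htangent₀ : ∃ P ∈ BSet L (V₀ : Set W), P ≤ U) (htangent₁ : ∃ P ∈ BSet L (V₁ : Set W), P ≤ U)
    (hext₀ : ∀ H : Submodule K W, H ≤ V₀ → finrank K H = r - 1 → ¬ U ≤ span L (H : Set W))
    (hext₁ : ∀ H : Submodule K W, H ≤ V₁ → finrank K H = r - 1 → ¬ U ≤ span L (H : Set W))
    (hsplash : Splash K L V₀ U r = Splash K L V₁ U r) :
    ∃ κ : W ≃ₗ[L] W, U.map (κ : W →ₗ[L] W) = U ∧
      (fun P => map (κ : W →ₗ[L] W) P) '' BSet L (V₀ : Set W) = BSet L (V₁ : Set W) := by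
  have hr : 0 < r := by have := U.finrank_le; omega
  have : FiniteDimensional K V₀ := .of_finrank_pos (by rwa [hV₀rank])
  have : FiniteDimensional K V₁ := .of_finrank_pos (by rwa [hV₁rank])
  have hV₀ := isBaseChange_of_span_range_eq_top (j := V₀.subtype)
    (by simpa using hV₀span) (hV₀rank.trans hW.symm)
  have hV₁ := isBaseChange_of_span_range_eq_top (j := V₁.subtype)
    (by simpa using hV₁span) (hV₁rank.trans hW.symm)
  obtain ⟨A₀, v₀, y₀, hA₀, hU₀, ⟨F₀⟩⟩ := exists_clubFrame hV₀ hU htangent₀ fun _ =>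
    not_le_ker_toDual hV₀ (hV₀rank ▸ hext₀)
  obtain ⟨A₁, v₁, y₁, hA₁, hU₁, ⟨F₁⟩⟩ := exists_clubFrame hV₁ hU htangent₁ fun _ =>
    not_le_ker_toDual hV₁ (hV₁rank ▸ hext₁)
  have hclub : club (A₀ : Set L) (v₀ : W) y₀ = club (A₁ : Set L) (v₁ : W) y₁ := by
    rw [← F₀.splash_eq_club hA₀ hU₀, ← F₁.splash_eq_club hA₁ hU₁, hV₀rank, hV₁rank, hsplash]
  obtain ⟨c, hc⟩ := exists_units_mem_iff_mul_mem_of_club_eq (A := A₀.toAddSubgroup)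
    (A' := A₁.toAddSubgroup) (fun h => hA₀ (toAddSubgroup_injective h))
    (F₀.linearIndependent hA₀) hclub
  obtain ⟨κ, hκV, hκv, hκy⟩ := F₀.exists_equiv F₁ hc
  refine ⟨κ, ?_, image_bSet κ hκV⟩
  conv_lhs => rw [← hU₀]
  rw [map_span_pair_eq κ.toLinearMap hκv hκy, hU₁]

/-- if two `q`-subgeometries tangent to the same line have the same
splash on that line, then there is a projectivity fixing the line and mapping one
subgeometry onto the other. -/
theorem same_splash_implies_projectively_equivalent
    (K L : Type*) [Field K] [Field L] [Algebra K L] [Fintype K] [Fintype L]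
    (r n : ℕ) (hr : 3 ≤ r) (hrn : r ≤ n) (hrank : Module.finrank K L = n)
    (V₀ V₁ : Submodule K (Fin r → L))
    (hV₀rank : Module.finrank K V₀ = r)
    (hV₀span : Submodule.span L (V₀ : Set (Fin r → L)) = ⊤)
    (hV₁rank : Module.finrank K V₁ = r)
    (hV₁span : Submodule.span L (V₁ : Set (Fin r → L)) = ⊤)
    (U : Submodule L (Fin r → L)) (hU : Module.finrank L U = 2)
    (htangent₀ : ∃! P, P ∈ BSet L (V₀ : Set (Fin r → L)) ∧ P ≤ U)
    (htangent₁ : ∃! P, P ∈ BSet L (V₁ : Set (Fin r → L)) ∧ P ≤ U)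
    (hext₀ : ∀ H : Submodule K (Fin r → L), H ≤ V₀ → Module.finrank K H = r - 1 →
      ¬ U ≤ Submodule.span L (H : Set (Fin r → L)))
    (hext₁ : ∀ H : Submodule K (Fin r → L), H ≤ V₁ → Module.finrank K H = r - 1 →
      ¬ U ≤ Submodule.span L (H : Set (Fin r → L)))
    (hsplash : Splash K L V₀ U r = Splash K L V₁ U r) :
    ∃ κ : (Fin r → L) ≃ₗ[L] (Fin r → L),
      Submodule.map (κ : (Fin r → L) →ₗ[L] (Fin r → L)) U = U ∧
      (fun P => Submodule.map (κ : (Fin r → L) →ₗ[L] (Fin r → L)) P) ''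
          BSet L (V₀ : Set (Fin r → L)) = BSet L (V₁ : Set (Fin r → L)) := by
  exact same_splash_implies_projectively_equivalent_general (finrank_fin_fun L) hV₀rank hV₀span
    hV₁rank hV₁span hU htangent₀.exists htangent₁.exists hext₀ hext₁ hsplash
end
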